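/- Let I be a nonempty finite index set, let 𝒜 = (A_i)_{i∈I} be a uniformly hyperbolic family in SL₂(ℝ) with attractor K, let p be a nondegenerate probability vector, let ν be the stationary measure of (𝒜,p), and write τ(q) = τ(ν,q). Fix q > 1. For every δ ∈ (0,1) there exists M ∈ ℕ such that for every m ≥ M, every s ∈ ℕ and every I ∈ 𝒟_s, one has Σ_{J ∈ 𝒟_{s+m}(I)} ν(J)^q ≤ 2^(-(τ(q)-δ)m) · ν(2I)^q. -/

import Mathlib

/-!
The proof has three ingredients: `ν`-almost every line is stretched by all products `A_w` at a rate
comparable with `‖A_w‖`, with a uniform constant; `ν` splits along words stopped at scale `2^{-s}`;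
and each stopped product is bi-Lipschitz at the right scale.

*Uniform expansion.* Suppose the orbit of a vector along a word of length `n` starts and ends with
norm at most `D` and never has norm below `d`. In orthogonal bases adapted to the orbit the matrices
are triangular, with off-diagonal entries (`shear`) adding up along the word, so the norm of the
product grows at most linearly in `n` (`bounded_segment`). Uniform hyperbolicity bounds `n`. Hence
no unit vector is strongly contracted both by a product `A_w` and by an inverse product `A_u⁻¹`
(`exists_no_bicontraction`), and a long word `u` whose inverse does not expand `x` has a prefix of
bounded length whose inverse strongly contracts `x` (`exists_short_contraction`). Therefore `x` stays
away from the direction contracted by any `A_w` of large norm, so that `|A_w x| ≥ κ ‖A_w‖` for all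
`w` (`exists_uniform_expansion`).

*Full measure.* If `τ(q) ≤ δ` the estimate follows from `∑ x_j^q ≤ (∑ x_j)^q`. Otherwise `τ(q) > 0`,
and `ν` gives uniformly small mass to short arcs (`exists_small_radius`). Iterating stationarity `n`
times, the lines `A_u x` outside the set `P` of uniformly expanded directions have `x` in a short arc
around the direction contracted by `A_u`; hence `ν(P) = 1` (`exists_expSet`). Only stationarity
enters here, not the attractor.

*Localization.* Write `ν = ∑ a_w (A_w)_* ν` over words stopped when `‖A_w‖²` reaches a constant
multiple of `2^s` (`exists_expansion`). The constant is chosen so that `A_w P ⊆ 2I` as soon as `A_w P`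
meets `I`; the total weight of these words is then at most `ν(2I)`, and Jensen's inequality reduces
the claim to `∑_J ν(A_w⁻¹ J)^q ≤ C ∑_{J'} ν(J')^q` with `J'` of level `m` (`word_estimate`). On `P`
the map `A_w` scales distances by `2^{-s}` up to constants, so every `A_w⁻¹ J ∩ P` meets boundedly many
`J'` and conversely. By definition of `τ(q)` the sum over `J'` is at most `2^{-(τ(q) - δ/2) m}`
for large `m`, and the constant is absorbed by the remaining `δ/2`.
-/

open MeasureTheory Filter Set Topology

namespace Paper

noncomputable section

abbrev Mat2 : Type := Matrix (Fin 2) (Fin 2) ℝ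
abbrev SL2 : Type := Matrix.SpecialLinearGroup (Fin 2) ℝ

/-- The operator norm on 2×2 real matrices induced by the Euclidean norm on ℝ². -/
def opNorm (M : Mat2) : ℝ := ‖(Matrix.toEuclideanLin M).toContinuousLinearMap‖

/-- The product `A_{i₁} ⋯ A_{i_n}` of the matrices along a word `w = (i₁, …, i_n)`. -/
def wordProd {ι : Type*} (A : ι → SL2) (w : List ι) : SL2 := (w.map A).prod

/-- The product `p_{i₁} ⋯ p_{i_n}` of the weights along a word `w = (i₁, …, i_n)`. -/
def wordWeight {ι : Type*} (p : ι → ℝ) (w : List ι) : ℝ := (w.map p).prod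

/-- A finite family in SL₂(ℝ) is uniformly hyperbolic if `‖A_i‖ ≥ c rⁿ` for all words of
length `n ≥ 1`. -/
def UniformlyHyperbolic {ι : Type*} (A : ι → SL2) : Prop :=
  ∃ c > (0:ℝ), ∃ r > (1:ℝ), ∀ w : List ι, w ≠ [] →
    c * r ^ w.length ≤ opNorm (wordProd A w : Mat2)

/-- Strongly Diophantine: distinct words of the same length give matrices that are
exponentially separated. -/
def StronglyDiophantine {ι : Type*} (A : ι → SL2) : Prop :=
  ∃ c ∈ Set.Ioo (0:ℝ) 1, ∀ w w' : List ι, w ≠ [] → w.length = w'.length → w ≠ w' →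
    c ^ w.length ≤ opNorm ((wordProd A w : Mat2) - (wordProd A w' : Mat2))

/-- The real projective line. -/
abbrev RP1 : Type := Projectivization ℝ (Fin 2 → ℝ)

lemma cos_sin_ne_zero (θ : ℝ) : ![Real.cos θ, Real.sin θ] ≠ 0 := by
  intro h
  have h0 : Real.cos θ = 0 := by simpa using congrFun h 0
  have h1 : Real.sin θ = 0 := by simpa using congrFun h 1
  have h2 := Real.sin_sq_add_cos_sq θ
  rw [h0, h1] at h2
  norm_num at h2

/-- The point of ℝP¹ in the direction of angle `θ`. -/
def dir (θ : ℝ) : RP1 := Projectivization.mk ℝ ![Real.cos θ, Real.sin θ] (cos_sin_ne_zero θ)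

/-- The quotient topology on ℝP¹ (expressed through the angle parametrization). -/
instance : TopologicalSpace RP1 := TopologicalSpace.coinduced dir inferInstance

/-- The Borel σ-algebra on ℝP¹. -/
instance : MeasurableSpace RP1 := borel RP1

/-- The natural action of `A ∈ SL₂(ℝ)` on ℝP¹, `A·[v] = [Av]`. -/
def pact (A : SL2) : RP1 → RP1 :=
  Projectivization.map (Matrix.SpecialLinearGroup.toLin' A).toLinearMap
    (Matrix.SpecialLinearGroup.toLin' A).injective

/-- `K` is the attractor of the family `A`: the (unique) nonempty compact set with
`K = ⋃ᵢ Aᵢ·K`. -/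
def IsAttractor {ι : Type*} [Fintype ι] (A : ι → SL2) (K : Set RP1) : Prop :=
  K.Nonempty ∧ IsCompact K ∧ K = ⋃ i : ι, pact (A i) '' K

/-- `ν` is stationary for the family `A` with weights `p`: `ν = Σ_i p_i (A_i)_* ν`. -/
def IsStationary {ι : Type*} [Fintype ι] (A : ι → SL2) (p : ι → ℝ) (ν : Measure RP1) : Prop :=
  ν = ∑ i : ι, ENNReal.ofReal (p i) • Measure.map (pact (A i)) ν

/-- The `k`-th arc of the `2^{-m}` dyadic partition of ℝP¹. -/
def dyadic (m k : ℕ) : Set RP1 :=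
  dir '' Set.Ico (Real.pi * k / 2 ^ m) (Real.pi * (k + 1) / 2 ^ m)

/-- The concentric doubled arc `2I` of the `k`-th arc of the `2^{-m}` dyadic partition. -/
def dyadic2 (m k : ℕ) : Set RP1 :=
  dir '' Set.Ico (Real.pi * ((k : ℝ) - 1 / 2) / 2 ^ m) (Real.pi * ((k : ℝ) + 3 / 2) / 2 ^ m)

/-- `Σ_{I ∈ 𝒟_m} ν(I)^q`. -/
def lqSum (ν : Measure RP1) (q : ℝ) (m : ℕ) : ℝ :=
  ∑ k ∈ Finset.range (2 ^ m), ((ν (dyadic m k)).toReal) ^ q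

/-- The L^q spectrum `τ(ν,q) = liminf_m −(1/m) log₂ Σ_{I∈𝒟_m} ν(I)^q`. -/
def lqSpectrum (ν : Measure RP1) (q : ℝ) : ℝ :=
  Filter.liminf (fun m : ℕ => -(1 / (m : ℝ)) * Real.logb 2 (lqSum ν q m)) Filter.atTop

/-- `(1/n) log₂ Σ_{i ∈ Iⁿ} p_i^q ‖A_i‖^{2s}`, the `n`-th approximant of the pressure
`Ψ_q(s)`. -/
def psiAvg {ι : Type*} [Fintype ι] (A : ι → SL2) (p : ι → ℝ) (q s : ℝ) (n : ℕ) : ℝ :=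
  (1 / (n : ℝ)) * Real.logb 2
    (∑ w : Fin n → ι,
      (wordWeight p (List.ofFn w)) ^ q * (opNorm (wordProd A (List.ofFn w) : Mat2)) ^ (2 * s))

/-- `t = τ̃(q)`: `t` is the unique positive zero of the pressure function `Ψ_q`. -/
def IsPressureZero {ι : Type*} [Fintype ι] (A : ι → SL2) (p : ι → ℝ) (q t : ℝ) : Prop :=
  0 < t ∧
  Filter.Tendsto (fun n => psiAvg A p q t n) Filter.atTop (nhds 0) ∧
  ∀ s : ℝ, 0 < s → Filter.Tendsto (fun n => psiAvg A p q s n) Filter.atTop (nhds 0) → s = t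

/-- The angle metric on ℝP¹: `d([v],[w]) = arccos(|⟨v,w⟩| / (‖v‖ ‖w‖))`. -/
def pdist (x y : RP1) : ℝ :=
  Real.arccos (|x.rep 0 * y.rep 0 + x.rep 1 * y.rep 1| /
    (Real.sqrt (x.rep 0 ^ 2 + x.rep 1 ^ 2) * Real.sqrt (y.rep 0 ^ 2 + y.rep 1 ^ 2)))

/-- The open ball in ℝP¹ of radius `r` and center `x`. -/
def pball (x : RP1) (r : ℝ) : Set RP1 := {y | pdist x y < r}

instance : Fact (0 < Real.pi) := ⟨Real.pi_pos⟩

/-- The angle coordinate `Θ : ℝP¹ → ℝ/πℤ`. -/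
def theta (x : RP1) : AddCircle Real.pi :=
  ((Complex.arg ((x.rep 0 : ℂ) + (x.rep 1 : ℂ) * Complex.I) : ℝ) : AddCircle Real.pi)

/-- `w` is a `2^m` stopping word for the family `A`. -/
def IsStopping {ι : Type*} (A : ι → SL2) (m : ℕ) (w : List ι) : Prop :=
  w ≠ [] ∧
  (∀ j : ℕ, 1 ≤ j → j < w.length → opNorm (wordProd A (w.take j) : Mat2) ^ 2 < (2:ℝ) ^ m) ∧
  (2 : ℝ) ^ m ≤ opNorm (wordProd A w : Mat2) ^ 2

/-- `Σ_{i ∈ Ω_m} p_i^q`, the `L^q` sum over the `2^m` stopping words. -/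
def stopSum {ι : Type*} [Fintype ι] (A : ι → SL2) (p : ι → ℝ) (q : ℝ) (m : ℕ) : ℝ :=
  ∑' w : List ι,
    Set.indicator {w : List ι | IsStopping A m w} (fun w => (wordWeight p w) ^ q) w

/-- `Σ_{J ∈ 𝒟_{s+m}(I)} ν(J)^q` for `I` the `k`-th arc of `𝒟_s`. -/
def localSum (ν : Measure RP1) (q : ℝ) (s m k : ℕ) : ℝ :=
  ∑ j ∈ Finset.range (2 ^ (s + m)),
    Set.indicator {j : ℕ | (dyadic (s + m) j ∩ dyadic s k).Nonempty}
      (fun j => (ν (dyadic (s + m) j)).toReal ^ q) j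

/-! ### Linear algebra of `SL₂(ℝ)` acting on the plane -/

/-- The Euclidean norm on `Fin 2 → ℝ` (whose Mathlib norm is the sup norm). -/
def nv (v : Fin 2 → ℝ) : ℝ := √(v 0 ^ 2 + v 1 ^ 2)

/-- The area form `v ∧ w`. -/
def om (v w : Fin 2 → ℝ) : ℝ := v 0 * w 1 - v 1 * w 0

/-- The Euclidean inner product. -/
def dt (v w : Fin 2 → ℝ) : ℝ := v 0 * w 0 + v 1 * w 1

/-- Rotation by a right angle. -/
def rot (v : Fin 2 → ℝ) : Fin 2 → ℝ := ![-v 1, v 0]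

/-- The linear action of `SL₂(ℝ)` on the plane. -/
def ap (B : SL2) (v : Fin 2 → ℝ) : Fin 2 → ℝ := (B : Mat2).mulVec v

/-- The Frobenius norm. It dominates the operator norm, is submultiplicative, and is invariant
under inversion in `SL₂(ℝ)`, which makes it more convenient than the operator norm. -/
def Nf (B : SL2) : ℝ :=
  √((B : Mat2) 0 0 ^ 2 + (B : Mat2) 0 1 ^ 2 + (B : Mat2) 1 0 ^ 2 + (B : Mat2) 1 1 ^ 2)

lemma nv_nonneg (v : Fin 2 → ℝ) : 0 ≤ nv v := Real.sqrt_nonneg _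

lemma nv_sq (v : Fin 2 → ℝ) : nv v ^ 2 = v 0 ^ 2 + v 1 ^ 2 := Real.sq_sqrt (by positivity)

lemma Nf_nonneg (B : SL2) : 0 ≤ Nf B := Real.sqrt_nonneg _

lemma Nf_sq (B : SL2) : Nf B ^ 2 =
    (B : Mat2) 0 0 ^ 2 + (B : Mat2) 0 1 ^ 2 + (B : Mat2) 1 0 ^ 2 + (B : Mat2) 1 1 ^ 2 :=
  Real.sq_sqrt (by positivity)

lemma ap_zero_coord (B : SL2) (v : Fin 2 → ℝ) :
    ap B v 0 = (B : Mat2) 0 0 * v 0 + (B : Mat2) 0 1 * v 1 := by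
  simp [ap, Matrix.mulVec, dotProduct, Fin.sum_univ_two]

lemma ap_one_coord (B : SL2) (v : Fin 2 → ℝ) :
    ap B v 1 = (B : Mat2) 1 0 * v 0 + (B : Mat2) 1 1 * v 1 := by
  simp [ap, Matrix.mulVec, dotProduct, Fin.sum_univ_two]

lemma SL2_det (B : SL2) :
    (B : Mat2) 0 0 * (B : Mat2) 1 1 - (B : Mat2) 0 1 * (B : Mat2) 1 0 = 1 := by
  have := B.2
  rwa [Matrix.det_fin_two] at this

lemma ap_one (v : Fin 2 → ℝ) : ap 1 v = v := by simp [ap]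

lemma ap_mul (B C : SL2) (v : Fin 2 → ℝ) : ap (B * C) v = ap B (ap C v) := by
  rw [ap, ap, ap, Matrix.mulVec_mulVec, Matrix.SpecialLinearGroup.coe_mul]

lemma ap_inv_ap (B : SL2) (v : Fin 2 → ℝ) : ap B⁻¹ (ap B v) = v := by
  rw [← ap_mul, inv_mul_cancel, ap_one]

lemma ap_ap_inv (B : SL2) (v : Fin 2 → ℝ) : ap B (ap B⁻¹ v) = v := by
  rw [← ap_mul, mul_inv_cancel, ap_one]

lemma ap_smul (B : SL2) (t : ℝ) (v : Fin 2 → ℝ) : ap B (t • v) = t • ap B v := by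
  simp [ap, Matrix.mulVec_smul]

lemma ap_add (B : SL2) (v w : Fin 2 → ℝ) : ap B (v + w) = ap B v + ap B w := by
  simp [ap, Matrix.mulVec_add]

lemma nv_smul (t : ℝ) (v : Fin 2 → ℝ) : nv (t • v) = |t| * nv v := by
  rw [nv, nv, ← Real.sqrt_sq_eq_abs, ← Real.sqrt_mul (sq_nonneg t)]
  congr 1
  simp
  ring

lemma nv_pos {v : Fin 2 → ℝ} (hv : v ≠ 0) : 0 < nv v := by
  apply Real.sqrt_pos.2
  by_contra h
  apply hv
  have h0 : v 0 = 0 := by nlinarith [sq_nonneg (v 0), sq_nonneg (v 1)]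
  have h1 : v 1 = 0 := by nlinarith [sq_nonneg (v 0), sq_nonneg (v 1)]
  ext i
  fin_cases i <;> simp [h0, h1]

lemma ne_zero_of_nv {v : Fin 2 → ℝ} (h : 0 < nv v) : v ≠ 0 := by
  rintro rfl
  simp [nv] at h

lemma ap_ne_zero (B : SL2) {v : Fin 2 → ℝ} (hv : v ≠ 0) : ap B v ≠ 0 := by
  intro h
  apply hv
  rw [← ap_inv_ap B v, h]
  simp [ap]

lemma om_dt_sq (v w : Fin 2 → ℝ) : om v w ^ 2 + dt v w ^ 2 = (nv v * nv w) ^ 2 := by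
  rw [mul_pow, nv_sq, nv_sq, om, dt]; ring

lemma abs_om_le (v w : Fin 2 → ℝ) : |om v w| ≤ nv v * nv w :=
  abs_le_of_sq_le_sq (by nlinarith [om_dt_sq v w, sq_nonneg (dt v w)])
    (mul_nonneg (nv_nonneg _) (nv_nonneg _))

lemma abs_dt_le (v w : Fin 2 → ℝ) : |dt v w| ≤ nv v * nv w :=
  abs_le_of_sq_le_sq (by nlinarith [om_dt_sq v w, sq_nonneg (om v w)])
    (mul_nonneg (nv_nonneg _) (nv_nonneg _))

lemma nv_add_le (v w : Fin 2 → ℝ) : nv (v + w) ≤ nv v + nv w := by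
  apply le_of_sq_le_sq _ (add_nonneg (nv_nonneg _) (nv_nonneg _))
  have h : nv (v + w) ^ 2 = nv v ^ 2 + nv w ^ 2 + 2 * dt v w := by
    simp only [nv_sq, dt, Pi.add_apply]; ring
  have := (abs_le.1 (abs_dt_le v w)).2
  nlinarith

lemma nv_rot (v : Fin 2 → ℝ) : nv (rot v) = nv v := by
  simp only [nv, rot]; congr 1; simp; ring

lemma om_ap (B : SL2) (v w : Fin 2 → ℝ) : om (ap B v) (ap B w) = om v w := by
  simp only [om, ap_zero_coord, ap_one_coord]
  linear_combination (v 0 * w 1 - v 1 * w 0) * SL2_det B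

lemma nv_ap_le (B : SL2) (v : Fin 2 → ℝ) : nv (ap B v) ≤ Nf B * nv v := by
  apply le_of_sq_le_sq _ (mul_nonneg (Nf_nonneg _) (nv_nonneg _))
  rw [mul_pow, nv_sq, nv_sq, Nf_sq, ap_zero_coord, ap_one_coord]
  nlinarith [sq_nonneg ((B : Mat2) 0 0 * v 1 - (B : Mat2) 0 1 * v 0),
    sq_nonneg ((B : Mat2) 1 0 * v 1 - (B : Mat2) 1 1 * v 0)]

lemma Nf_inv (B : SL2) : Nf B⁻¹ = Nf B := by
  simp only [Nf, Matrix.SpecialLinearGroup.coe_inv, Matrix.adjugate_fin_two]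
  congr 1
  simp
  ring

lemma nv_le_ap (B : SL2) (v : Fin 2 → ℝ) : nv v ≤ Nf B * nv (ap B v) := by
  have := nv_ap_le B⁻¹ (ap B v)
  rwa [ap_inv_ap, Nf_inv] at this

lemma Nf_sq_cols (B : SL2) : Nf B ^ 2 = nv (ap B ![1, 0]) ^ 2 + nv (ap B ![0, 1]) ^ 2 := by
  rw [Nf_sq, nv_sq, nv_sq]
  simp only [ap_zero_coord, ap_one_coord]
  simp
  ring

lemma Nf_mul_le (B C : SL2) : Nf (B * C) ≤ Nf B * Nf C := by
  apply le_of_sq_le_sq _ (mul_nonneg (Nf_nonneg _) (Nf_nonneg _))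
  rw [Nf_sq_cols, mul_pow, Nf_sq_cols C, ap_mul, ap_mul]
  have h1 := pow_le_pow_left₀ (nv_nonneg _) (nv_ap_le B (ap C ![1, 0])) 2
  have h2 := pow_le_pow_left₀ (nv_nonneg _) (nv_ap_le B (ap C ![0, 1])) 2
  rw [mul_pow] at h1 h2
  linarith

lemma two_le_Nf_sq (B : SL2) : 2 ≤ Nf B ^ 2 := by
  rw [Nf_sq]
  nlinarith [SL2_det B, sq_nonneg ((B : Mat2) 0 0 - (B : Mat2) 1 1),
    sq_nonneg ((B : Mat2) 0 1 + (B : Mat2) 1 0)]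

lemma one_le_Nf (B : SL2) : 1 ≤ Nf B := by
  nlinarith [two_le_Nf_sq B, Nf_nonneg B]

lemma Nf_one_le : Nf 1 ≤ 2 := by
  apply le_of_sq_le_sq _ (by norm_num)
  rw [Nf_sq]
  simp
  norm_num

lemma opNorm_le_Nf (B : SL2) : opNorm (B : Mat2) ≤ Nf B := by
  refine ContinuousLinearMap.opNorm_le_bound _ (Nf_nonneg _) fun x => ?_
  have h : ∀ y : EuclideanSpace ℝ (Fin 2), ‖y‖ = nv y.ofLp := fun y => by
    rw [EuclideanSpace.norm_eq, nv, Fin.sum_univ_two]; simp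
  rw [h, h]
  exact nv_ap_le B x.ofLp

/-- A unit vector contracted by `B` at the optimal rate up to a factor `2`. -/
lemma exists_contracted (B : SL2) : ∃ y, nv y = 1 ∧ nv (ap B y) ≤ 2 / Nf B := by
  have hN : 0 < Nf B := by linarith [one_le_Nf B]
  have key : ∃ e, nv e = 1 ∧ Nf B / 2 ≤ nv (ap B⁻¹ e) := by
    by_contra! h
    have h1 := h ![1, 0] (by simp [nv])
    have h2 := h ![0, 1] (by simp [nv])
    have h3 := Nf_sq_cols B⁻¹
    rw [Nf_inv] at h3
    have := pow_lt_pow_left₀ h1 (nv_nonneg _) two_ne_zero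
    have := pow_lt_pow_left₀ h2 (nv_nonneg _) two_ne_zero
    nlinarith
  obtain ⟨e, he, hBe⟩ := key
  have hpos : 0 < nv (ap B⁻¹ e) := by linarith
  refine ⟨(nv (ap B⁻¹ e))⁻¹ • ap B⁻¹ e, ?_, ?_⟩
  · rw [nv_smul, abs_of_pos (inv_pos.2 hpos), inv_mul_cancel₀ hpos.ne']
  · rw [ap_smul, ap_ap_inv, nv_smul, he, abs_of_pos (inv_pos.2 hpos), mul_one]
    rw [inv_le_comm₀ hpos (by positivity), inv_div]
    exact hBe

/-- Nearly parallel unit vectors have images of nearly equal norm. -/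
lemma nv_ap_le_of_om (B : SL2) {x y : Fin 2 → ℝ} (hx : nv x = 1) (hy : nv y = 1) :
    nv (ap B y) ≤ nv (ap B x) + |om x y| * Nf B := by
  have hdec : y = dt x y • x + om x y • rot x := by
    have h1 : x 0 ^ 2 + x 1 ^ 2 = 1 := by rw [← nv_sq, hx]; norm_num
    ext i
    fin_cases i
    · simp [dt, om, rot]; linear_combination (-y 0) * h1
    · simp [dt, om, rot]; linear_combination (-y 1) * h1
  have h2 : |dt x y| ≤ 1 := by simpa [hx, hy] using abs_dt_le x y
  have h3 : nv (ap B (rot x)) ≤ Nf B := by simpa [nv_rot, hx] using nv_ap_le B (rot x)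
  calc nv (ap B y) = nv (dt x y • ap B x + om x y • ap B (rot x)) := by
        conv_lhs => rw [hdec, ap_add, ap_smul, ap_smul]
    _ ≤ |dt x y| * nv (ap B x) + |om x y| * nv (ap B (rot x)) := by
        rw [← nv_smul, ← nv_smul]; exact nv_add_le _ _
    _ ≤ 1 * nv (ap B x) + |om x y| * Nf B := by
        gcongr
        exact nv_nonneg _
    _ = _ := by ring

/-- The shear of `B` along `z`: the coefficient with
`B (rot z / |z|²) = shear B z • B z + rot (B z) / |B z|²`.
It is the off-diagonal entry of `B` in bases adapted to `z` and `B z`, normalized so as to be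
additive along products. -/
def shear (B : SL2) (z : Fin 2 → ℝ) : ℝ :=
  dt (ap B (rot z)) (ap B z) / (nv z ^ 2 * nv (ap B z) ^ 2)

/-- The cocycle identity for the shear. -/
lemma shear_mul (B C : SL2) {z : Fin 2 → ℝ} (hz : z ≠ 0) :
    shear (B * C) z = shear C z + shear B (ap C z) := by
  have h1 := nv_pos hz
  have h2 := nv_pos (ap_ne_zero C hz)
  have h3 := nv_pos (ap_ne_zero B (ap_ne_zero C hz))
  have hdet : om (ap C z) (ap C (rot z)) = nv z ^ 2 := by
    rw [om_ap, nv_sq]; simp [om, rot]; ring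
  have hdec : nv (ap C z) ^ 2 • ap C (rot z)
      = dt (ap C (rot z)) (ap C z) • ap C z + nv z ^ 2 • rot (ap C z) := by
    rw [← hdet, nv_sq]
    ext i
    fin_cases i <;> simp [dt, om, rot] <;> ring
  have key : nv (ap C z) ^ 2 * dt (ap B (ap C (rot z))) (ap B (ap C z))
      = dt (ap C (rot z)) (ap C z) * nv (ap B (ap C z)) ^ 2
        + nv z ^ 2 * dt (ap B (rot (ap C z))) (ap B (ap C z)) := by
    have := congrArg (fun t => dt (ap B t) (ap B (ap C z))) hdec
    simp only [ap_add, ap_smul] at this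
    rw [nv_sq (ap B (ap C z))]
    simp only [dt, Pi.add_apply, Pi.smul_apply, smul_eq_mul] at this ⊢
    linear_combination this
  unfold shear
  rw [ap_mul, ap_mul]
  field_simp
  linear_combination key

lemma abs_shear_le (B : SL2) {z : Fin 2 → ℝ} (hz : z ≠ 0) :
    |shear B z| ≤ Nf B / (nv z * nv (ap B z)) := by
  have h1 := nv_pos hz
  have h2 := nv_pos (ap_ne_zero B hz)
  rw [shear, abs_div, abs_of_pos (by positivity : 0 < nv z ^ 2 * nv (ap B z) ^ 2),
    div_le_div_iff₀ (by positivity) (by positivity)]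
  have h3 := abs_dt_le (ap B (rot z)) (ap B z)
  have h4 := nv_ap_le B (rot z)
  rw [nv_rot] at h4
  have : |dt (ap B (rot z)) (ap B z)| ≤ Nf B * nv z * nv (ap B z) :=
    h3.trans (by gcongr)
  calc |dt (ap B (rot z)) (ap B z)| * (nv z * nv (ap B z))
      ≤ (Nf B * nv z * nv (ap B z)) * (nv z * nv (ap B z)) := by gcongr
    _ = _ := by ring

/-- In bases adapted to `z` and `B z` the matrix of `B` is triangular, so its norm is controlled
by the lengths of `z` and `B z` and by the shear. -/
lemma Nf_sq_eq_shear (B : SL2) {z : Fin 2 → ℝ} (hz : z ≠ 0) :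
    Nf B ^ 2 = nv (ap B z) ^ 2 / nv z ^ 2 + nv z ^ 2 / nv (ap B z) ^ 2
      + shear B z ^ 2 * (nv z ^ 2 * nv (ap B z) ^ 2) := by
  have h1 := nv_pos hz
  have h2 := nv_pos (ap_ne_zero B hz)
  have h3 : Nf B ^ 2 * nv z ^ 2 = nv (ap B z) ^ 2 + nv (ap B (rot z)) ^ 2 := by
    rw [Nf_sq, nv_sq, nv_sq, nv_sq]
    simp only [ap_zero_coord, ap_one_coord]
    simp [rot]
    ring
  have h4 := om_dt_sq (ap B (rot z)) (ap B z)
  have h5 : om (ap B (rot z)) (ap B z) = - nv z ^ 2 := by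
    rw [om_ap, nv_sq]; simp [om, rot]; ring
  rw [h5] at h4
  unfold shear
  field_simp
  nlinarith

/-! ### Uniform hyperbolicity and bounded orbit segments -/

section Hyp

variable {ι : Type} {A : ι → SL2}

lemma wordProd_nil : wordProd A [] = 1 := by simp [wordProd]

lemma wordProd_cons (i : ι) (w : List ι) : wordProd A (i :: w) = A i * wordProd A w := by
  simp [wordProd]

lemma wordProd_append (u w : List ι) : wordProd A (u ++ w) = wordProd A u * wordProd A w := by
  simp [wordProd]

lemma wordProd_singleton (i : ι) : wordProd A [i] = A i := by simp [wordProd]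

lemma Nf_wordProd_le {L : ℝ} (hL1 : 1 ≤ L) (hL : ∀ i, Nf (A i) ≤ L) (w : List ι) :
    Nf (wordProd A w) ≤ 2 * L ^ w.length := by
  induction w with
  | nil => simpa [wordProd_nil] using Nf_one_le
  | cons i w ih =>
    rw [wordProd_cons, List.length_cons, pow_succ]
    calc _ ≤ Nf (A i) * Nf (wordProd A w) := Nf_mul_le _ _
      _ ≤ L * (2 * L ^ w.length) := by
        gcongr
        · exact Nf_nonneg _
        · exact hL i
      _ = _ := by ring

lemma nv_wordProd_inv_ge {L : ℝ} (hL1 : 1 ≤ L) (hL : ∀ i, Nf (A i) ≤ L) (w : List ι)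
    (x : Fin 2 → ℝ) : nv x ≤ L ^ w.length * nv (ap (wordProd A w)⁻¹ x) := by
  induction w generalizing x with
  | nil => simp [wordProd_nil, ap_one]
  | cons i w ih =>
    rw [wordProd_cons, mul_inv_rev, ap_mul, List.length_cons, pow_succ]
    calc nv x ≤ Nf (A i)⁻¹ * nv (ap (A i)⁻¹ x) := nv_le_ap _ _
      _ ≤ L * (L ^ w.length * nv (ap (wordProd A w)⁻¹ (ap (A i)⁻¹ x))) := by
        rw [Nf_inv]
        gcongr
        · exact nv_nonneg _
        · exact hL i
        · exact ih _
      _ = _ := by ring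

lemma nv_wordProd_ge {L : ℝ} (hL1 : 1 ≤ L) (hL : ∀ i, Nf (A i) ≤ L) (w : List ι)
    (x : Fin 2 → ℝ) : nv x ≤ L ^ w.length * nv (ap (wordProd A w) x) := by
  induction w with
  | nil => simp [wordProd_nil, ap_one]
  | cons i w ih =>
    rw [wordProd_cons, ap_mul, List.length_cons, pow_succ]
    calc nv x ≤ L ^ w.length * nv (ap (wordProd A w) x) := ih
      _ ≤ L ^ w.length * (L * nv (ap (A i) (ap (wordProd A w) x))) := by
        gcongr
        refine (nv_le_ap (A i) _).trans ?_
        gcongr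
        · exact nv_nonneg _
        · exact hL i
      _ = _ := by ring

/-- If the orbit of `z` along `t` never gets shorter than `d`, the shears add up to at most
linear growth. -/
lemma abs_shear_wordProd_le {L d : ℝ} (hL : ∀ i, Nf (A i) ≤ L) (hd : 0 < d)
    {z : Fin 2 → ℝ} (hz : z ≠ 0) (t : List ι)
    (h : ∀ t', t' <:+ t → d ≤ nv (ap (wordProd A t') z)) :
    |shear (wordProd A t) z| ≤ t.length * (L / d ^ 2) := by
  induction t with
  | nil =>
    have : shear 1 z = 0 := by simp [shear, ap_one, dt, rot]; left; ring
    simp [wordProd_nil, this]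
  | cons i t ih =>
    have ih' := ih fun t' ht' => h t' (ht'.trans (List.suffix_cons i t))
    rw [wordProd_cons, shear_mul _ _ hz]
    refine (abs_add_le _ _).trans ?_
    have h1 := abs_shear_le (A i) (ap_ne_zero (wordProd A t) hz)
    have h2 := h t (List.suffix_cons i t)
    have h3 := h (i :: t) (List.suffix_refl _)
    rw [wordProd_cons, ap_mul] at h3
    have h4 : Nf (A i) / (nv (ap (wordProd A t) z) * nv (ap (A i) (ap (wordProd A t) z)))
        ≤ L / d ^ 2 := by
      rw [sq]
      apply div_le_div₀ ((Nf_nonneg _).trans (hL i)) (hL i) (by positivity)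
      exact mul_le_mul h2 h3 hd.le (hd.le.trans h2)
    rw [List.length_cons]
    push_cast
    linarith

/-- An orbit segment of length `n` with ends of norm at most `D` and all points of norm at least
`d` forces the matrix norm along the segment to grow at most linearly in `n`. -/
lemma bounded_segment {L d D c r : ℝ} (hL : ∀ i, Nf (A i) ≤ L) (hd : 0 < d)
    (hc : 0 < c) (hr : 1 < r)
    (hg : ∀ w : List ι, w ≠ [] → c * r ^ w.length ≤ Nf (wordProd A w))
    {z : Fin 2 → ℝ} {t : List ι} (ht : t ≠ []) (hz : nv z ≤ D)
    (hz' : nv (ap (wordProd A t) z) ≤ D)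
    (h : ∀ t', t' <:+ t → d ≤ nv (ap (wordProd A t') z)) :
    (c * r ^ t.length) ^ 2 ≤ 2 * (D / d) ^ 2 + t.length ^ 2 * L ^ 2 * (D / d) ^ 4 := by
  have h0 : d ≤ nv z := by simpa [wordProd_nil, ap_one] using h [] List.nil_suffix
  have h1 := h t (List.suffix_refl _)
  have hz0 : z ≠ 0 := ne_zero_of_nv (hd.trans_le h0)
  have hp0 := hd.trans_le h0
  have hp1 := hd.trans_le h1
  have hD : 0 < D := hp0.trans_le hz
  have hs := abs_shear_wordProd_le hL hd hz0 t h
  calc (c * r ^ t.length) ^ 2 ≤ Nf (wordProd A t) ^ 2 := by gcongr; exact hg t ht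
    _ = _ := Nf_sq_eq_shear _ hz0
    _ ≤ D ^ 2 / d ^ 2 + D ^ 2 / d ^ 2 + (t.length * (L / d ^ 2)) ^ 2 * (D ^ 2 * D ^ 2) := by
      refine add_le_add (add_le_add (by gcongr) (by gcongr)) (mul_le_mul ?_ (by gcongr)
        (by positivity) (by positivity))
      exact sq_le_sq.2 (hs.trans (le_abs_self _))
    _ = _ := by field_simp; ring

lemma exists_growth (L K c r : ℝ) (hc : 0 < c) (hr : 1 < r) :
    ∃ n0 : ℕ, 0 < n0 ∧ ∀ n : ℕ, n0 ≤ n →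
      2 * K ^ 2 + n ^ 2 * L ^ 2 * K ^ 4 < (c * r ^ n) ^ 2 := by
  have hr2 : 1 < r ^ 2 := by nlinarith
  have h1 := tendsto_pow_const_div_const_pow_of_one_lt 2 hr2
  have h0 := tendsto_pow_const_div_const_pow_of_one_lt 0 hr2
  have h2 : Tendsto (fun n : ℕ => 2 * K ^ 2 * ((n : ℝ) ^ 0 / (r ^ 2) ^ n)
      + L ^ 2 * K ^ 4 * ((n : ℝ) ^ 2 / (r ^ 2) ^ n)) atTop (𝓝 0) := by
    simpa using (h0.const_mul (2 * K ^ 2)).add (h1.const_mul (L ^ 2 * K ^ 4))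
  obtain ⟨n0, hn0⟩ := eventually_atTop.1 (h2.eventually (gt_mem_nhds (by positivity : 0 < c ^ 2)))
  refine ⟨n0 + 1, by omega, fun n hn => ?_⟩
  have h3 := hn0 n (by omega)
  have h4 : 0 < (r ^ 2) ^ n := by positivity
  have h5 := mul_lt_mul_of_pos_right h3 h4
  calc _ = (2 * K ^ 2 * ((n : ℝ) ^ 0 / (r ^ 2) ^ n)
      + L ^ 2 * K ^ 4 * ((n : ℝ) ^ 2 / (r ^ 2) ^ n)) * (r ^ 2) ^ n := by field_simp
    _ < _ := h5
    _ = _ := by ring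

/-- No unit vector is strongly contracted both by a product `A_w` and by an inverse product
`A_u⁻¹`. Otherwise, cutting the orbit at the first times its norm drops below `e` in either
direction gives a segment excluded by `bounded_segment`. -/
lemma exists_no_bicontraction {L c r : ℝ} (hL1 : 1 ≤ L) (hL : ∀ i, Nf (A i) ≤ L)
    (hc : 0 < c) (hr : 1 < r)
    (hg : ∀ w : List ι, w ≠ [] → c * r ^ w.length ≤ Nf (wordProd A w)) :
    ∃ e : ℝ, 0 < e ∧ e < 1 ∧ ∀ x, nv x = 1 → ∀ u w : List ι,
      nv (ap (wordProd A u)⁻¹ x) ≤ e → ¬ nv (ap (wordProd A w) x) ≤ e := by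
  have hL0 : 0 < L := by linarith
  obtain ⟨n0, hn0pos, hn0⟩ := exists_growth L L c r hc hr
  refine ⟨(2 * L ^ n0)⁻¹, by positivity, ?_, ?_⟩
  · apply inv_lt_one_of_one_lt₀
    have : 1 ≤ L ^ n0 := one_le_pow₀ hL1
    linarith
  intro x hx u w hu hw
  set e : ℝ := (2 * L ^ n0)⁻¹ with he
  have he0 : 0 < e := by positivity
  have he1 : e < 1 := by
    apply inv_lt_one_of_one_lt₀
    have : 1 ≤ L ^ n0 := one_le_pow₀ hL1
    linarith
  -- words of minimal length realizing each contraction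
  have hmin : ∀ P : List ι → Prop, (∃ u, P u) →
      ∃ u, P u ∧ ∀ u', u'.length < u.length → ¬ P u' := by
    intro P ⟨u, hu⟩
    obtain ⟨v, hv, hv'⟩ := (measure (List.length (α := ι))).wf.has_min {u | P u} ⟨u, hu⟩
    exact ⟨v, hv, fun u' h1 h2 => hv' u' h2 h1⟩
  obtain ⟨u, hu, hu'⟩ := hmin (fun u => nv (ap (wordProd A u)⁻¹ x) ≤ e) ⟨u, hu⟩
  obtain ⟨w, hw, hw'⟩ := hmin (fun w => nv (ap (wordProd A w) x) ≤ e) ⟨w, hw⟩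
  simp only [not_le] at hu' hw'
  have hlen : ∀ n, 1 ≤ L ^ n * e → n0 ≤ n := by
    intro n hn
    by_contra! hlt
    have : L ^ n ≤ L ^ n0 := pow_le_pow_right₀ hL1 hlt.le
    have h1 : L ^ n0 * e = 1 / 2 := by rw [he]; field_simp
    nlinarith
  have hul : n0 ≤ u.length := by
    apply hlen
    have := nv_wordProd_inv_ge hL1 hL u x
    rw [hx] at this
    exact this.trans (by gcongr)
  have hwne : w ≠ [] := by
    rintro rfl
    rw [wordProd_nil, ap_one, hx] at hw
    linarith
  have hune : u ≠ [] := by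
    rintro rfl
    simp at hul
    omega
  -- every prefix of `u` and every suffix of `w` keeps the norm above `e / L`
  have hpre : ∀ a b, u = a ++ b → e / L ≤ nv (ap (wordProd A a)⁻¹ x) := by
    intro a b hab
    by_cases hb : b = []
    · subst hb
      rw [List.append_nil] at hab
      subst hab
      obtain ⟨v, i, rfl⟩ := (List.eq_nil_or_concat u).resolve_left hune
      simp only [List.concat_eq_append] at *
      have h1 := hu' v (by simp)
      have h2 := nv_le_ap (A i)⁻¹ (ap (wordProd A v)⁻¹ x)
      rw [wordProd_append, wordProd_singleton, mul_inv_rev, ap_mul, div_le_iff₀ hL0, mul_comm]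
      refine h1.le.trans (h2.trans ?_)
      rw [Nf_inv]
      gcongr
      · exact nv_nonneg _
      · exact hL i
    · have := hu' a (by
        rw [hab, List.length_append]
        have := List.length_pos_iff.2 hb
        omega)
      exact (div_le_self he0.le hL1).trans this.le
  have hsuf : ∀ b, b <:+ w → e / L ≤ nv (ap (wordProd A b) x) := by
    rintro b ⟨a, hab⟩
    cases a with
    | nil =>
      rw [List.nil_append] at hab
      subst hab
      obtain ⟨i, v, rfl⟩ := List.exists_cons_of_ne_nil hwne
      have h1 := hw' v (by simp)
      have h2 := nv_le_ap (A i) (ap (wordProd A v) x)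
      rw [wordProd_cons, ap_mul, div_le_iff₀ hL0, mul_comm]
      refine h1.le.trans (h2.trans ?_)
      gcongr
      · exact nv_nonneg _
      · exact hL i
    | cons i a =>
      have := hw' b (by rw [← hab]; simp)
      exact (div_le_self he0.le hL1).trans this.le
  have hseg := bounded_segment (t := w ++ u) (z := ap (wordProd A u)⁻¹ x) (D := e) (d := e / L)
    hL (by positivity) hc hr hg (by simp [hwne]) hu
    (by rw [wordProd_append, ap_mul, ap_ap_inv]; exact hw) (by
      intro t' ht'
      obtain ⟨a₀, ha₀⟩ := ht'
      rcases List.append_eq_append_iff.1 ha₀ with ⟨b, hb, hbw⟩ | ⟨a, -, ha⟩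
      · rw [hbw, wordProd_append, ap_mul, ap_ap_inv]
        exact hsuf b ⟨a₀, hb.symm⟩
      · have h1 : ap (wordProd A t') (ap (wordProd A u)⁻¹ x) = ap (wordProd A a)⁻¹ x := by
          rw [ha, wordProd_append, mul_inv_rev, ap_mul, ap_ap_inv]
        rw [h1]
        exact hpre a t' ha)
  have hK : e / (e / L) = L := by field_simp
  rw [hK] at hseg
  have := hn0 (w ++ u).length (by rw [List.length_append]; omega)
  linarith

/-- A long word `u` with `A_u⁻¹` not expanding a unit vector `x` has a prefix of bounded length
whose inverse contracts `x` strongly. -/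
lemma exists_short_contraction {L c r : ℝ} (hL : ∀ i, Nf (A i) ≤ L)
    (hc : 0 < c) (hr : 1 < r)
    (hg : ∀ w : List ι, w ≠ [] → c * r ^ w.length ≤ Nf (wordProd A w))
    {e : ℝ} (he0 : 0 < e) (he1 : e < 1)
    (he : ∀ x, nv x = 1 → ∀ u w : List ι,
      nv (ap (wordProd A u)⁻¹ x) ≤ e → ¬ nv (ap (wordProd A w) x) ≤ e) :
    ∃ N : ℕ, ∀ x, nv x = 1 → ∀ u : List ι, N ≤ u.length → nv (ap (wordProd A u)⁻¹ x) ≤ 1 →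
      ∃ u' : List ι, u'.length ≤ N ∧ nv (ap (wordProd A u')⁻¹ x) ≤ e / 2 := by
  obtain ⟨N, hNpos, hN⟩ := exists_growth L (e⁻¹ / (e / 2)) c r hc hr
  refine ⟨N, fun x hx u hu hux => ?_⟩
  by_contra! hcon
  set b := u.take N with hb
  have hbl : b.length = N := by simp [hb, hu]
  have hbne : b ≠ [] := by
    intro h
    rw [h] at hbl
    simp at hbl
    omega
  set z := ap (wordProd A b)⁻¹ x with hz
  have hz0 : 0 < nv z := lt_trans (by positivity) (hcon b hbl.le)
  have hup : nv z ≤ e⁻¹ := by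
    by_contra! hgt
    have hlt : (nv z)⁻¹ < e := (inv_lt_comm₀ he0 hz0).1 hgt
    refine he ((nv z)⁻¹ • z) ?_ (u.drop N) b ?_ ?_
    · rw [nv_smul, abs_of_pos (by positivity), inv_mul_cancel₀ hz0.ne']
    · rw [ap_smul, nv_smul, abs_of_pos (by positivity), hz, ← ap_mul, ← mul_inv_rev,
        ← wordProd_append, hb, List.take_append_drop, ← hb, ← hz]
      calc _ ≤ (nv z)⁻¹ * 1 := by gcongr
        _ ≤ e := by linarith
    · rw [ap_smul, nv_smul, abs_of_pos (by positivity), hz, ap_ap_inv, hx, ← hz]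
      linarith
  have h1 : (1 : ℝ) ≤ e⁻¹ := (one_le_inv₀ he0).2 he1.le
  have hseg := bounded_segment (t := b) (z := z) (D := e⁻¹) (d := e / 2) hL (by positivity)
    hc hr hg hbne hup (by rw [hz, ap_ap_inv, hx]; exact h1) (by
      rintro t' ⟨a, ha⟩
      have h2 : ap (wordProd A t') z = ap (wordProd A a)⁻¹ x := by
        rw [hz, ← ha, wordProd_append, mul_inv_rev, ap_mul, ap_ap_inv]
      rw [h2]
      refine (hcon a ?_).le
      rw [← hbl, ← ha, List.length_append]
      omega)
  have := hN b.length hbl.ge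
  linarith

/-- Directions not expanded by the inverse of some long product are expanded by every product at
a rate comparable with its norm. -/
lemma exists_uniform_expansion {L c r : ℝ} (hL1 : 1 ≤ L) (hL : ∀ i, Nf (A i) ≤ L)
    (hc : 0 < c) (hr : 1 < r)
    (hg : ∀ w : List ι, w ≠ [] → c * r ^ w.length ≤ Nf (wordProd A w)) :
    ∃ κ : ℝ, 0 < κ ∧ κ ≤ 1 ∧ ∃ N : ℕ, ∀ x, nv x = 1 →
      (∃ u : List ι, N ≤ u.length ∧ nv (ap (wordProd A u)⁻¹ x) ≤ 1) →
      ∀ w : List ι, κ * Nf (wordProd A w) ≤ nv (ap (wordProd A w) x) := by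
  have hL0 : 0 < L := by linarith
  obtain ⟨e, he0, he1, he⟩ := exists_no_bicontraction hL1 hL hc hr hg
  obtain ⟨N, hN⟩ := exists_short_contraction hL hc hr hg he0 he1 he
  refine ⟨min 1 (min (e ^ 2 / 4) (e / (8 * L ^ N))), by positivity, min_le_left _ _, N, ?_⟩
  rintro x hx ⟨u, hu, hux⟩ w
  obtain ⟨u', hu', hu'x⟩ := hN x hx u hu hux
  set B := wordProd A w
  have hB1 := one_le_Nf B
  have hB0 : 0 < Nf B := by linarith
  by_cases hB : Nf B < 2 / e
  · have h1 := nv_le_ap B x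
    rw [hx] at h1
    rw [lt_div_iff₀ he0] at hB
    calc _ ≤ e ^ 2 / 4 * Nf B := by
          gcongr; exact (min_le_right _ _).trans (min_le_left _ _)
      _ ≤ nv (ap B x) := by
        -- `|Bx| ≥ 1 / ‖B‖ ≥ (e² / 4) ‖B‖`
        refine le_of_mul_le_mul_left (le_trans ?_ h1) hB0
        nlinarith [mul_pos he0 hB0]
  · push Not at hB
    obtain ⟨y, hy, hBy⟩ := exists_contracted B
    have hBye : nv (ap B y) ≤ e := by
      refine hBy.trans ?_
      rw [div_le_iff₀ hB0]
      rw [div_le_iff₀ he0] at hB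
      linarith
    have hyu : e < nv (ap (wordProd A u')⁻¹ y) := by
      by_contra! h
      exact he y hy u' w h hBye
    have h1 := nv_ap_le_of_om (wordProd A u')⁻¹ hx hy
    have h2 : Nf (wordProd A u')⁻¹ ≤ 2 * L ^ N := by
      rw [Nf_inv]
      refine (Nf_wordProd_le hL1 hL u').trans ?_
      gcongr
    have h3 : |om x y| ≤ nv (ap B x) * (2 / Nf B) := by
      rw [← om_ap B]
      refine (abs_om_le _ _).trans ?_
      gcongr
      exact nv_nonneg _
    have h4 : e / 2 ≤ |om x y| * (2 * L ^ N) := by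
      have := mul_le_mul_of_nonneg_left h2 (abs_nonneg (om x y))
      linarith
    have h5 : e / 2 ≤ nv (ap B x) * (2 / Nf B) * (2 * L ^ N) :=
      h4.trans (by gcongr)
    calc _ ≤ e / (8 * L ^ N) * Nf B := by
          gcongr; exact (min_le_right _ _).trans (min_le_right _ _)
      _ ≤ (nv (ap B x) * (2 / Nf B) * (2 * L ^ N)) * 2 / (8 * L ^ N) * Nf B := by
          gcongr; linarith
      _ = _ := by field_simp; ring

end Hyp

/-! ### The projective line: angles, sine distance, expansion factors -/

instance : BorelSpace RP1 := ⟨rfl⟩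

/-- The sine of the angle between two lines. -/
def sd (x y : RP1) : ℝ := |om x.rep y.rep| / (nv x.rep * nv y.rep)

/-- The factor by which `B` stretches the line `x`. -/
def gr (B : SL2) (x : RP1) : ℝ := nv (ap B x.rep) / nv x.rep

/-- The unit vector of angle `θ`. -/
def uv (θ : ℝ) : Fin 2 → ℝ := ![Real.cos θ, Real.sin θ]

lemma nv_uv (θ : ℝ) : nv (uv θ) = 1 := by simp [nv, uv]

lemma rep_mk {v : Fin 2 → ℝ} (hv : v ≠ 0) :
    ∃ t : ℝ, t ≠ 0 ∧ (Projectivization.mk ℝ v hv).rep = t • v := by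
  obtain ⟨a, ha⟩ := Projectivization.exists_smul_eq_mk_rep ℝ v hv
  exact ⟨a, a.ne_zero, ha.symm⟩

lemma om_smul (s t : ℝ) (v w : Fin 2 → ℝ) : om (s • v) (t • w) = s * t * om v w := by
  simp [om]; ring

lemma sd_mk {v w : Fin 2 → ℝ} (hv : v ≠ 0) (hw : w ≠ 0) :
    sd (Projectivization.mk ℝ v hv) (Projectivization.mk ℝ w hw) = |om v w| / (nv v * nv w) := by
  obtain ⟨s, hs, h1⟩ := rep_mk hv
  obtain ⟨t, ht, h2⟩ := rep_mk hw
  have := nv_pos hv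
  have := nv_pos hw
  have := abs_pos.2 hs
  have := abs_pos.2 ht
  rw [sd, h1, h2, om_smul, nv_smul, nv_smul, abs_mul, abs_mul]
  field_simp

lemma gr_mk (B : SL2) {v : Fin 2 → ℝ} (hv : v ≠ 0) :
    gr B (Projectivization.mk ℝ v hv) = nv (ap B v) / nv v := by
  obtain ⟨s, hs, h1⟩ := rep_mk hv
  have := nv_pos hv
  have := abs_pos.2 hs
  rw [gr, h1, ap_smul, nv_smul, nv_smul]
  field_simp

lemma pact_mk (B : SL2) {v : Fin 2 → ℝ} (hv : v ≠ 0) :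
    pact B (Projectivization.mk ℝ v hv) = Projectivization.mk ℝ (ap B v) (ap_ne_zero B hv) := by
  rw [pact, Projectivization.map_mk]
  rfl

lemma pact_one : pact 1 = id := by
  ext x
  induction x using Projectivization.ind with
  | h v hv => simp only [pact_mk, ap_one, id]

lemma pact_mul (B C : SL2) (x : RP1) : pact (B * C) x = pact B (pact C x) := by
  induction x using Projectivization.ind with
  | h v hv => simp only [pact_mk, ap_mul]

lemma sd_pact (B : SL2) (x y : RP1) : sd (pact B x) (pact B y) = sd x y / (gr B x * gr B y) := by
  induction x using Projectivization.ind with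
  | h v hv =>
  induction y using Projectivization.ind with
  | h w hw =>
  have := nv_pos hv
  have := nv_pos hw
  have := nv_pos (ap_ne_zero B hv)
  have := nv_pos (ap_ne_zero B hw)
  rw [pact_mk, pact_mk, sd_mk, sd_mk, gr_mk, gr_mk, om_ap]
  field_simp

lemma gr_pos (B : SL2) (x : RP1) : 0 < gr B x :=
  div_pos (nv_pos (ap_ne_zero B x.rep_nonzero)) (nv_pos x.rep_nonzero)

lemma gr_le (B : SL2) (x : RP1) : gr B x ≤ Nf B :=
  (div_le_iff₀ (nv_pos x.rep_nonzero)).2 (nv_ap_le B _)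

lemma gr_inv_pact (B : SL2) (x : RP1) : gr B⁻¹ (pact B x) = (gr B x)⁻¹ := by
  induction x using Projectivization.ind with
  | h v hv => rw [pact_mk, gr_mk, gr_mk, ap_inv_ap, inv_div]

lemma sd_nonneg (x y : RP1) : 0 ≤ sd x y :=
  div_nonneg (abs_nonneg _) (mul_nonneg (nv_nonneg _) (nv_nonneg _))

lemma sd_le_one (x y : RP1) : sd x y ≤ 1 :=
  div_le_one_of_le₀ (abs_om_le _ _) (mul_nonneg (nv_nonneg _) (nv_nonneg _))

lemma sd_self (x : RP1) : sd x x = 0 := by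
  have : om x.rep x.rep = 0 := by simp [om]; ring
  simp [sd, this]

lemma sd_dir (θ φ : ℝ) : sd (dir θ) (dir φ) = |Real.sin (θ - φ)| := by
  rw [dir, dir, sd_mk]
  change |om (uv θ) (uv φ)| / (nv (uv θ) * nv (uv φ)) = _
  rw [nv_uv, nv_uv, Real.sin_sub, abs_sub_comm]
  simp [om, uv]

lemma gr_dir (B : SL2) (θ : ℝ) : gr B (dir θ) = nv (ap B (uv θ)) := by
  rw [dir, gr_mk]
  change nv (ap B (uv θ)) / nv (uv θ) = _
  rw [nv_uv, div_one]

lemma dir_add_int_mul_pi (θ : ℝ) (n : ℤ) : dir (θ + n * Real.pi) = dir θ := by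
  rw [dir, dir, Projectivization.mk_eq_mk_iff']
  refine ⟨(-1) ^ n, ?_⟩
  ext i
  fin_cases i <;> simp [Real.cos_add_int_mul_pi, Real.sin_add_int_mul_pi]

lemma mk_eq_dir_arg {v : Fin 2 → ℝ} (hv : v ≠ 0) :
    Projectivization.mk ℝ v hv = dir (Complex.arg ⟨v 0, v 1⟩) := by
  rw [dir, Projectivization.mk_eq_mk_iff']
  refine ⟨‖(⟨v 0, v 1⟩ : ℂ)‖, ?_⟩
  ext i
  fin_cases i
  · simp
  · simp

lemma exists_dir (x : RP1) : ∃ θ, 0 ≤ θ ∧ θ < Real.pi ∧ dir θ = x := by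
  induction x using Projectivization.ind with
  | h v hv =>
  rw [mk_eq_dir_arg]
  set t := Complex.arg ⟨v 0, v 1⟩
  refine ⟨Int.fract (t / Real.pi) * Real.pi, ?_, ?_, ?_⟩
  · exact mul_nonneg (Int.fract_nonneg _) Real.pi_pos.le
  · exact mul_lt_of_lt_one_left Real.pi_pos (Int.fract_lt_one _)
  · rw [← dir_add_int_mul_pi _ ⌊t / Real.pi⌋, ← add_mul, Int.fract_add_floor,
      div_mul_cancel₀ _ Real.pi_pos.ne']

lemma dir_eq_dir {θ φ : ℝ} (h : dir θ = dir φ) : ∃ n : ℤ, θ = φ + n * Real.pi := by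
  have h1 : sd (dir θ) (dir φ) = 0 := by rw [h, sd_self]
  rw [sd_dir, abs_eq_zero, Real.sin_eq_zero_iff] at h1
  obtain ⟨n, hn⟩ := h1
  exact ⟨n, by linarith⟩

/-- Jordan's inequality: an angle with small sine is close to a multiple of `π`. -/
lemma exists_near_of_sin {t ρ : ℝ} (h : |Real.sin t| ≤ ρ) :
    ∃ n : ℤ, |t - n * Real.pi| ≤ Real.pi / 2 * ρ := by
  refine ⟨round (t / Real.pi), ?_⟩
  set n := round (t / Real.pi)
  have hpi := Real.pi_pos
  have h1 : |t - n * Real.pi| ≤ Real.pi / 2 := by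
    have := abs_sub_round (t / Real.pi)
    have h2 : t - n * Real.pi = (t / Real.pi - n) * Real.pi := by field_simp
    rw [h2, abs_mul, abs_of_pos hpi]
    nlinarith
  have h2 := Real.mul_abs_le_abs_sin h1
  have h3 : |Real.sin (t - n * Real.pi)| = |Real.sin t| := by
    rw [Real.sin_sub_int_mul_pi, abs_mul, abs_zpow, abs_neg, abs_one, one_zpow, one_mul]
  rw [h3] at h2
  have h4 := h2.trans h
  calc |t - n * Real.pi| = Real.pi / 2 * (2 / Real.pi * |t - n * Real.pi|) := by field_simp
    _ ≤ _ := by gcongr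

lemma continuous_dir : Continuous dir := continuous_coinduced_rng

lemma isOpenMap_dir : IsOpenMap dir := by
  intro U hU
  rw [isOpen_coinduced]
  have : dir ⁻¹' (dir '' U) = ⋃ n : ℤ, (fun t => t + n * Real.pi) ⁻¹' U := by
    ext t
    simp only [mem_preimage, mem_image, mem_iUnion]
    constructor
    · rintro ⟨s, hs, hst⟩
      obtain ⟨n, hn⟩ := dir_eq_dir hst
      exact ⟨n, hn ▸ hs⟩
    · rintro ⟨n, hn⟩
      exact ⟨_, hn, dir_add_int_mul_pi t n⟩
  rw [this]
  exact isOpen_iUnion fun n => hU.preimage (by fun_prop)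

lemma isClosed_singleton_dir (θ : ℝ) : IsClosed ({dir θ} : Set RP1) := by
  rw [← isOpen_compl_iff, isOpen_coinduced]
  have : dir ⁻¹' {dir θ}ᶜ = {t | Real.sin (t - θ) ≠ 0} := by
    ext t
    simp only [mem_preimage, mem_compl_iff, mem_singleton_iff, mem_ofPred_eq, not_iff_not]
    constructor
    · intro h
      have : sd (dir t) (dir θ) = 0 := by rw [h, sd_self]
      rwa [sd_dir, abs_eq_zero] at this
    · intro h
      obtain ⟨n, hn⟩ := Real.sin_eq_zero_iff.1 h
      rw [← dir_add_int_mul_pi θ n]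
      congr 1
      linarith
  rw [this]
  exact isOpen_ne_fun (by fun_prop) continuous_const

lemma measurableSet_dir_Ico (a b : ℝ) : MeasurableSet (dir '' Set.Ico a b) := by
  by_cases h : a < b
  · rw [← Set.Ioo_insert_left h, Set.image_insert_eq, Set.insert_eq]
    exact (isClosed_singleton_dir a).measurableSet.union
      (isOpenMap_dir _ isOpen_Ioo).measurableSet
  · simp [Set.Ico_eq_empty h]

lemma continuous_pact (B : SL2) : Continuous (pact B) := by
  rw [continuous_coinduced_dom, continuous_iff_continuousAt]
  intro θ
  have hne : ∀ t, ap B (uv t) ≠ 0 := fun t => ap_ne_zero B (cos_sin_ne_zero t)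
  set z : ℝ → ℂ := fun t => ⟨ap B (uv t) 0, ap B (uv t) 1⟩ with hz
  have hzc : Continuous z := by
    have : z = fun t => ((ap B (uv t) 0 : ℝ) : ℂ) + ((ap B (uv t) 1 : ℝ) : ℂ) * Complex.I := by
      ext t
      apply Complex.ext <;> simp [hz]
    rw [this]
    simp only [ap_zero_coord, ap_one_coord, uv, Matrix.cons_val_zero, Matrix.cons_val_one]
    fun_prop
  have hzne : z θ ≠ 0 := by
    intro h
    apply hne θ
    have h0 := congrArg Complex.re h
    have h1 := congrArg Complex.im h
    ext i
    fin_cases i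
    · simpa [hz] using h0
    · simpa [hz] using h1
  have e1 : pact B ∘ dir = fun t => dir (Complex.arg (z t)) := by
    ext t
    rw [Function.comp, dir, pact_mk, mk_eq_dir_arg]
    rfl
  -- the two branches `arg z` and `arg (-z)` of the angle cover all cases
  have e2 : pact B ∘ dir = fun t => dir (Complex.arg (-z t)) := by
    ext t
    have hn : -ap B (uv t) ≠ 0 := neg_ne_zero.2 (hne t)
    have : pact B (dir t) = Projectivization.mk ℝ (-ap B (uv t)) hn := by
      rw [dir, pact_mk, Projectivization.mk_eq_mk_iff']
      exact ⟨-1, by simp [uv]⟩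
    rw [Function.comp, this, mk_eq_dir_arg]
    congr 2
  by_cases hs : z θ ∈ Complex.slitPlane
  · rw [e1]
    exact continuous_dir.continuousAt.comp
      ((Complex.continuousAt_arg hs).comp hzc.continuousAt)
  · rw [e2]
    have hs' : -z θ ∈ Complex.slitPlane := by
      rw [Complex.mem_slitPlane_iff] at hs ⊢
      push Not at hs
      left
      rcases hs.1.lt_or_eq with h | h
      · simpa using h
      · exact absurd (Complex.ext h hs.2) hzne
    exact continuous_dir.continuousAt.comp
      (ContinuousAt.comp (f := fun t => -z t) (Complex.continuousAt_arg hs') hzc.neg.continuousAt)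

lemma measurableEmbedding_pact (B : SL2) : MeasurableEmbedding (pact B) := by
  have h1 : ∀ C : SL2, ∀ x, pact C⁻¹ (pact C x) = x := fun C x => by
    rw [← pact_mul, inv_mul_cancel, pact_one, id]
  let e : RP1 ≃ₜ RP1 :=
    { toFun := pact B
      invFun := pact B⁻¹
      left_inv := h1 B
      right_inv := fun x => by simpa using h1 B⁻¹ x
      continuous_toFun := continuous_pact B
      continuous_invFun := continuous_pact B⁻¹ }
  exact e.measurableEmbedding

/-! ### Dyadic arcs -/

lemma exists_mem_dyadic (m : ℕ) (x : RP1) : ∃ k < 2 ^ m, x ∈ dyadic m k := by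
  obtain ⟨θ, h0, h1, rfl⟩ := exists_dir x
  have hpi := Real.pi_pos
  have hp : (0 : ℝ) < 2 ^ m := by positivity
  have h2 : 0 ≤ θ * 2 ^ m / Real.pi := by positivity
  refine ⟨⌊θ * 2 ^ m / Real.pi⌋₊, ?_, θ, ⟨?_, ?_⟩, rfl⟩
  · rw [Nat.floor_lt h2, div_lt_iff₀ hpi]
    push_cast
    nlinarith
  · have := Nat.floor_le h2
    rw [div_le_iff₀ hp]
    rw [le_div_iff₀ hpi] at this
    linarith
  · have := Nat.lt_floor_add_one (θ * 2 ^ m / Real.pi)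
    rw [lt_div_iff₀ hp]
    rw [div_lt_iff₀ hpi] at this
    linarith

lemma mem_dyadic_iff {m k : ℕ} (hk : k < 2 ^ m) {θ : ℝ} (h0 : 0 ≤ θ) (h1 : θ < Real.pi) :
    dir θ ∈ dyadic m k ↔ (k : ℝ) ≤ θ * 2 ^ m / Real.pi ∧ θ * 2 ^ m / Real.pi < k + 1 := by
  have hpi := Real.pi_pos
  have hp : (0 : ℝ) < 2 ^ m := by positivity
  have key : ∀ t : ℝ, t ∈ Set.Ico (Real.pi * k / 2 ^ m) (Real.pi * (k + 1) / 2 ^ m) ↔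
      (k : ℝ) ≤ t * 2 ^ m / Real.pi ∧ t * 2 ^ m / Real.pi < k + 1 := by
    intro t
    rw [mem_Ico, div_le_iff₀ hp, lt_div_iff₀ hp, le_div_iff₀ hpi, div_lt_iff₀ hpi,
      mul_comm Real.pi, mul_comm Real.pi]
  rw [← key]
  constructor
  · rintro ⟨t, ht, hte⟩
    obtain ⟨n, hn⟩ := dir_eq_dir hte
    have ht' := (key t).1 ht
    rw [le_div_iff₀ hpi, div_lt_iff₀ hpi] at ht'
    have hk' : (k : ℝ) + 1 ≤ 2 ^ m := by exact_mod_cast hk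
    have ht0 : 0 ≤ t := by
      by_contra! h
      have : 0 ≤ (k : ℝ) * Real.pi := by positivity
      nlinarith
    have ht1 : t < Real.pi := by
      by_contra! h
      have := mul_le_mul_of_nonneg_right hk' hpi.le
      nlinarith
    have hn1 : (n : ℝ) < 1 := by
      by_contra! h
      nlinarith
    have hn2 : (-1 : ℝ) < n := by
      by_contra! h
      nlinarith
    have hn0 : n = 0 := by
      have : n < 1 := by exact_mod_cast hn1
      have : -1 < n := by exact_mod_cast hn2
      omega
    subst hn0
    simp only [Int.cast_zero, zero_mul, add_zero] at hn
    rwa [← hn]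
  · intro h
    exact ⟨θ, h, rfl⟩

lemma dyadic_disjoint {m j k : ℕ} (hj : j < 2 ^ m) (hk : k < 2 ^ m) (hjk : j ≠ k) :
    Disjoint (dyadic m j) (dyadic m k) := by
  rw [Set.disjoint_left]
  intro x hx hx'
  obtain ⟨θ, h0, h1, rfl⟩ := exists_dir x
  rw [mem_dyadic_iff hj h0 h1] at hx
  rw [mem_dyadic_iff hk h0 h1] at hx'
  apply hjk
  have h2 : j < k + 1 := by exact_mod_cast hx.1.trans_lt hx'.2
  have h3 : k < j + 1 := by exact_mod_cast hx'.1.trans_lt hx.2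
  omega

lemma dyadic_nested {s m j k : ℕ} (hj : j < 2 ^ (s + m)) (hk : k < 2 ^ s)
    (h : (dyadic (s + m) j ∩ dyadic s k).Nonempty) : dyadic (s + m) j ⊆ dyadic s k := by
  obtain ⟨x, hx, hx'⟩ := h
  obtain ⟨θ, h0, h1, rfl⟩ := exists_dir x
  rw [mem_dyadic_iff hj h0 h1] at hx
  rw [mem_dyadic_iff hk h0 h1] at hx'
  have hm : (0 : ℝ) < 2 ^ m := by positivity
  have e : ∀ t : ℝ, t * 2 ^ (s + m) / Real.pi = t * 2 ^ s / Real.pi * 2 ^ m := fun t => by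
    rw [pow_add]; ring
  rw [e] at hx
  have h2 : k * 2 ^ m < j + 1 := by
    have : (k : ℝ) * 2 ^ m < j + 1 := lt_of_le_of_lt (by gcongr; exact hx'.1) hx.2
    exact_mod_cast this
  have h3 : j < (k + 1) * 2 ^ m := by
    have : (j : ℝ) < (k + 1) * 2 ^ m := hx.1.trans_lt (by gcongr; exact hx'.2)
    exact_mod_cast this
  have h4 : (k : ℝ) * 2 ^ m ≤ j := by exact_mod_cast Nat.lt_succ_iff.1 h2
  have h5 : (j : ℝ) + 1 ≤ (k + 1) * 2 ^ m := by exact_mod_cast h3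
  intro y hy
  obtain ⟨φ, g0, g1, rfl⟩ := exists_dir y
  rw [mem_dyadic_iff hj g0 g1, e] at hy
  rw [mem_dyadic_iff hk g0 g1]
  exact ⟨le_of_mul_le_mul_right (h4.trans hy.1) hm, lt_of_mul_lt_mul_right (hy.2.trans_le h5) hm.le⟩

lemma sd_le_of_mem_dyadic {m k : ℕ} {x y : RP1} (hx : x ∈ dyadic m k) (hy : y ∈ dyadic m k) :
    sd x y ≤ Real.pi / 2 ^ m := by
  obtain ⟨θ, hθ, rfl⟩ := hx
  obtain ⟨φ, hφ, rfl⟩ := hy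
  rw [sd_dir]
  refine Real.abs_sin_le_abs.trans ?_
  have : Real.pi * (k + 1) / 2 ^ m = Real.pi * k / 2 ^ m + Real.pi / 2 ^ m := by ring
  rw [this] at hθ hφ
  rw [abs_le]
  constructor <;> linarith [hθ.1, hθ.2, hφ.1, hφ.2]

lemma mem_dyadic2 {s k : ℕ} {x y : RP1} (hx : x ∈ dyadic s k) (h : sd y x < 1 / 2 ^ s) :
    y ∈ dyadic2 s k := by
  obtain ⟨θ, hθ, rfl⟩ := hx
  obtain ⟨φ, -, -, rfl⟩ := exists_dir y
  have hpi := Real.pi_pos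
  obtain ⟨n, hn⟩ := exists_near_of_sin (sd_dir φ θ).ge
  have h2 : |φ - θ - n * Real.pi| < Real.pi / 2 * (1 / 2 ^ s) := hn.trans_lt (by gcongr)
  rw [abs_lt] at h2
  refine ⟨φ + (-n : ℤ) * Real.pi, ?_, dir_add_int_mul_pi _ _⟩
  have e1 : Real.pi * ((k : ℝ) - 1 / 2) / 2 ^ s
      = Real.pi * k / 2 ^ s - Real.pi / 2 * (1 / 2 ^ s) := by ring
  have e2 : Real.pi * ((k : ℝ) + 3 / 2) / 2 ^ s
      = Real.pi * (k + 1) / 2 ^ s + Real.pi / 2 * (1 / 2 ^ s) := by ring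
  rw [mem_Ico, e1, e2]
  push_cast
  constructor <;> linarith [hθ.1, hθ.2]

open Classical in
/-- A set contained in a ball of radius `b 2^{-m}` for the sine distance meets at most `2b + 3`
dyadic arcs of level `m`. -/
lemma card_dyadic_le (m b : ℕ) (y : RP1) (S : Set RP1) (hS : ∀ x ∈ S, sd x y ≤ b / 2 ^ m) :
    ((Finset.range (2 ^ m)).filter fun k => (dyadic m k ∩ S).Nonempty).card ≤ 2 * b + 3 := by
  obtain ⟨φ, h0, h1, rfl⟩ := exists_dir y
  have hpi := Real.pi_pos
  have hp : (0 : ℝ) < 2 ^ m := by positivity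
  set f := φ * 2 ^ m / Real.pi with hf
  have hsub : ((Finset.range (2 ^ m)).filter fun k => (dyadic m k ∩ S).Nonempty) ⊆
      (Finset.Icc (-(b + 1 : ℤ)) (b + 1)).image fun j => ((⌊f⌋ + j) % (2 ^ m : ℤ)).toNat := by
    intro k hk
    rw [Finset.mem_filter, Finset.mem_range] at hk
    obtain ⟨hk, x, hx, hxS⟩ := hk
    have hxy := hS x hxS
    obtain ⟨θ, hθ, rfl⟩ := hx
    rw [sd_dir] at hxy
    obtain ⟨n, hn⟩ := exists_near_of_sin hxy
    have h2 : |θ * 2 ^ m / Real.pi - f - n * 2 ^ m| ≤ b / 2 := by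
      have : θ * 2 ^ m / Real.pi - f - n * 2 ^ m = (θ - φ - n * Real.pi) * (2 ^ m / Real.pi) := by
        rw [hf]; field_simp
      rw [this, abs_mul, abs_of_pos (by positivity : 0 < 2 ^ m / Real.pi)]
      calc _ ≤ Real.pi / 2 * (b / 2 ^ m) * (2 ^ m / Real.pi) := by gcongr
        _ = _ := by field_simp
    have h3 : (k : ℝ) ≤ θ * 2 ^ m / Real.pi := by
      rw [le_div_iff₀ hpi]
      have := hθ.1
      rw [div_le_iff₀ hp] at this
      linarith
    have h4 : θ * 2 ^ m / Real.pi < k + 1 := by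
      rw [div_lt_iff₀ hpi]
      have := hθ.2
      rw [lt_div_iff₀ hp] at this
      linarith
    have h5 := Int.floor_le f
    have h6 := Int.lt_floor_add_one f
    rw [abs_le] at h2
    have hb : (0 : ℝ) ≤ b := by positivity
    rw [Finset.mem_image]
    refine ⟨k - ⌊f⌋ - n * 2 ^ m, ?_, ?_⟩
    · rw [Finset.mem_Icc]
      constructor
      · have : (-(b + 1 : ℝ)) ≤ k - ⌊f⌋ - n * 2 ^ m := by linarith
        exact_mod_cast this
      · have : (k - ⌊f⌋ - n * 2 ^ m : ℝ) ≤ b + 1 := by linarith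
        exact_mod_cast this
    · have : ⌊f⌋ + (k - ⌊f⌋ - n * 2 ^ m) = (k : ℤ) + 2 ^ m * (-n) := by ring
      simp only [this]
      rw [Int.add_mul_emod_self_left, Int.emod_eq_of_lt (by positivity) (by exact_mod_cast hk)]
      simp
  refine (Finset.card_le_card hsub).trans (Finset.card_image_le.trans ?_)
  rw [Int.card_Icc]
  omega

/-! ### Dyadic sums and the `L^q` spectrum -/

lemma sum_rpow_le_rpow_sum {α : Type*} (s : Finset α) (f : α → ℝ) (hf : ∀ i ∈ s, 0 ≤ f i)
    {q : ℝ} (hq : 1 ≤ q) : ∑ i ∈ s, f i ^ q ≤ (∑ i ∈ s, f i) ^ q := by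
  have e : ∀ x : ℝ, 0 ≤ x → x ^ q = x ^ (q - 1) * x := fun x hx => by
    rw [← Real.rpow_add_one' hx (by linarith), sub_add_cancel]
  rw [e _ (Finset.sum_nonneg hf), Finset.mul_sum]
  refine Finset.sum_le_sum fun i hi => ?_
  rw [e _ (hf i hi)]
  exact mul_le_mul_of_nonneg_right (Real.rpow_le_rpow (hf i hi)
    (Finset.single_le_sum hf hi) (by linarith)) (hf i hi)

open Classical in
lemma localSum_eq (ν : Measure RP1) (q : ℝ) (s m k : ℕ) : localSum ν q s m k =
    ∑ j ∈ (Finset.range (2 ^ (s + m))).filter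
      (fun j => (dyadic (s + m) j ∩ dyadic s k).Nonempty), ν.real (dyadic (s + m) j) ^ q := by
  rw [localSum, Finset.sum_filter]
  exact Finset.sum_congr rfl fun j _ => by
    simp only [Set.indicator_apply, mem_ofPred_eq, measureReal_def]

section Dyadic

variable {ν : Measure RP1} [IsProbabilityMeasure ν] {q : ℝ}

lemma sum_dyadic (m : ℕ) (F : Finset ℕ) (hF : F ⊆ Finset.range (2 ^ m)) :
    ∑ j ∈ F, ν.real (dyadic m j) = ν.real (⋃ j ∈ F, dyadic m j) := by
  rw [measureReal_biUnion_finset]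
  · intro j hj k hk hjk
    exact dyadic_disjoint (Finset.mem_range.1 (hF hj)) (Finset.mem_range.1 (hF hk)) hjk
  · exact fun j _ => measurableSet_dir_Ico _ _

lemma sum_dyadic_range (m : ℕ) : ∑ j ∈ Finset.range (2 ^ m), ν.real (dyadic m j) = 1 := by
  rw [sum_dyadic m _ subset_rfl]
  have : ⋃ j ∈ Finset.range (2 ^ m), dyadic m j = univ := by
    refine eq_univ_of_forall fun x => ?_
    obtain ⟨k, hk, hx⟩ := exists_mem_dyadic m x
    exact mem_biUnion (Finset.mem_coe.2 (Finset.mem_range.2 hk)) hx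
  rw [this, probReal_univ]

lemma lqSum_le_one (hq : 1 < q) (m : ℕ) : lqSum ν q m ≤ 1 := by
  refine (sum_rpow_le_rpow_sum _ _ (fun _ _ => ENNReal.toReal_nonneg) hq.le).trans ?_
  have := sum_dyadic_range (ν := ν) m
  simp only [measureReal_def] at this
  rw [this, Real.one_rpow]

lemma lqSum_pos (m : ℕ) : 0 < lqSum ν q m := by
  have h : (0 : ℝ) < ∑ j ∈ Finset.range (2 ^ m), ν.real (dyadic m j) := by
    rw [sum_dyadic_range]; exact one_pos
  obtain ⟨j, hj, hpos⟩ := Finset.exists_lt_of_sum_lt (s := Finset.range (2 ^ m))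
    (f := fun _ => (0 : ℝ)) (g := fun j => ν.real (dyadic m j)) (by simpa using h)
  exact Finset.sum_pos' (fun _ _ => Real.rpow_nonneg ENNReal.toReal_nonneg _)
    ⟨j, hj, Real.rpow_pos_of_pos hpos _⟩

/-- The `liminf` defining the spectrum is a genuine one, since all terms are nonnegative for
`m ≥ 1`; exponents below it therefore bound the dyadic sums. -/
lemma exists_lqSum_le (hq : 1 < q) {t : ℝ} (ht : t < lqSpectrum ν q) :
    ∃ M : ℕ, ∀ m ≥ M, lqSum ν q m ≤ (2 : ℝ) ^ (-t * m) := by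
  have hb : IsBoundedUnder (· ≥ ·) atTop
      (fun m : ℕ => -(1 / (m : ℝ)) * Real.logb 2 (lqSum ν q m)) := by
    refine isBoundedUnder_of ⟨0, fun m => ?_⟩
    have h1 : Real.logb 2 (lqSum ν q m) ≤ 0 :=
      Real.logb_nonpos one_lt_two (lqSum_pos m).le (lqSum_le_one hq m)
    exact mul_nonneg_of_nonpos_of_nonpos (neg_nonpos.2 (by positivity)) h1
  have h := eventually_lt_of_lt_liminf ht hb
  rw [eventually_atTop] at h
  obtain ⟨M, hM⟩ := h
  refine ⟨M + 1, fun m hm => ?_⟩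
  have h1 := hM m (by omega)
  have hm0 : (0 : ℝ) < m := by exact_mod_cast (by omega : 0 < m)
  rw [← Real.logb_le_iff_le_rpow one_lt_two (lqSum_pos m)]
  have h2 : t * m < -(1 / (m : ℝ)) * Real.logb 2 (lqSum ν q m) * m :=
    mul_lt_mul_of_pos_right h1 hm0
  have h3 : -(1 / (m : ℝ)) * Real.logb 2 (lqSum ν q m) * m = -Real.logb 2 (lqSum ν q m) := by
    field_simp
  linarith

lemma dyadic_subset_dyadic2 (s k : ℕ) : dyadic s k ⊆ dyadic2 s k := fun x hx =>
  mem_dyadic2 hx (by rw [sd_self]; positivity)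

/-- The estimate with exponent `0`, which suffices when the spectrum is at most `δ`. -/
lemma localSum_le_trivial (hq : 1 < q) {s m k : ℕ} (hk : k < 2 ^ s) :
    localSum ν q s m k ≤ ν.real (dyadic2 s k) ^ q := by
  classical
  rw [localSum_eq]
  refine (sum_rpow_le_rpow_sum _ _ (fun _ _ => measureReal_nonneg) hq.le).trans ?_
  refine Real.rpow_le_rpow (Finset.sum_nonneg fun _ _ => measureReal_nonneg) ?_ (by linarith)
  rw [sum_dyadic _ _ (Finset.filter_subset _ _)]
  refine measureReal_mono (iUnion₂_subset fun j hj => ?_)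
  rw [Finset.mem_filter, Finset.mem_range] at hj
  exact (dyadic_nested hj.1 hk hj.2).trans (dyadic_subset_dyadic2 s k)

/-- A measure with positive spectrum gives uniformly small mass to small arcs. -/
lemma exists_small_radius (hq : 1 < q) (hτ : 0 < lqSpectrum ν q) {ε : ℝ} (hε : 0 < ε) :
    ∃ ρ > 0, ∀ (y : RP1) (S : Set RP1), (∀ x ∈ S, sd x y ≤ ρ) → ν.real S ≤ ε := by
  classical
  obtain ⟨M, hM⟩ := exists_lqSum_le hq (half_lt_self hτ)
  have ht : 0 < lqSpectrum ν q / 2 := half_pos hτ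
  set t := lqSpectrum ν q / 2
  have hlim : Tendsto (fun m : ℕ => ((2 : ℝ) ^ (-t)) ^ m) atTop (𝓝 0) :=
    tendsto_pow_atTop_nhds_zero_of_lt_one (by positivity)
      (Real.rpow_lt_one_of_one_lt_of_neg one_lt_two (by linarith))
  have hpos : 0 < (ε / 5) ^ q := Real.rpow_pos_of_pos (by positivity) _
  obtain ⟨m, hm1, hm2⟩ := ((hlim.eventually_lt_const hpos).and (eventually_ge_atTop M)).exists
  have hsmall : ∀ k < 2 ^ m, ν.real (dyadic m k) ≤ ε / 5 := by
    intro k hk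
    have h1 : ν.real (dyadic m k) ^ q ≤ lqSum ν q m :=
      Finset.single_le_sum (f := fun k => (ν (dyadic m k)).toReal ^ q)
        (fun _ _ => Real.rpow_nonneg ENNReal.toReal_nonneg _) (Finset.mem_range.2 hk)
    have h2 := hM m hm2
    rw [Real.rpow_mul (by norm_num), Real.rpow_natCast] at h2
    exact (Real.rpow_le_rpow_iff measureReal_nonneg (by positivity) (by linarith)).1
      (h1.trans (h2.trans hm1.le))
  refine ⟨1 / 2 ^ m, by positivity, fun y S hS => ?_⟩
  have hc := card_dyadic_le m 1 y S (by simpa using hS)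
  have hcov : S ⊆ ⋃ k ∈ (Finset.range (2 ^ m)).filter fun k => (dyadic m k ∩ S).Nonempty,
      dyadic m k := by
    intro x hx
    obtain ⟨k, hk, hxk⟩ := exists_mem_dyadic m x
    exact mem_biUnion (Finset.mem_coe.2 (Finset.mem_filter.2
      ⟨Finset.mem_range.2 hk, x, hxk, hx⟩)) hxk
  refine (measureReal_mono hcov (measure_ne_top _ _)).trans ((measureReal_biUnion_finset_le _ _).trans ?_)
  refine (Finset.sum_le_card_nsmul _ _ (ε / 5) fun k hk =>
    hsmall k (Finset.mem_range.1 (Finset.mem_filter.1 hk).1)).trans ?_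
  rw [nsmul_eq_mul]
  have hc' : (((Finset.range (2 ^ m)).filter fun k => (dyadic m k ∩ S).Nonempty).card : ℝ) ≤ 5 := by
    exact_mod_cast hc
  calc _ ≤ 5 * (ε / 5) := by gcongr
    _ = ε := by ring

end Dyadic

/-! ### Iterating stationarity along stopping words -/

section Stationary

variable {ι : Type} [Fintype ι] {A : ι → SL2} {p : ι → ℝ} {ν : Measure RP1}
  [IsProbabilityMeasure ν]

lemma stationary_real (hp : ∀ i, 0 < p i) (hν : IsStationary A p ν) (S : Set RP1) :
    ν.real S = ∑ i, p i * ν.real (pact (A i) ⁻¹' S) := by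
  conv_lhs => rw [measureReal_def, hν]
  rw [Measure.finsetSum_apply, ENNReal.toReal_sum]
  · refine Finset.sum_congr rfl fun i _ => ?_
    rw [Measure.smul_apply, (measurableEmbedding_pact (A i)).map_apply, smul_eq_mul,
      ENNReal.toReal_mul, ENNReal.toReal_ofReal (hp i).le, measureReal_def]
  · intro i _
    rw [Measure.smul_apply, (measurableEmbedding_pact (A i)).map_apply, smul_eq_mul]
    exact ENNReal.mul_ne_top ENNReal.ofReal_ne_top (measure_ne_top _ _)

/-- Expanding `ν` along the tree of words below `u`, until every branch satisfies `halt`. The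
property `inv` is passed on to the children of the words at which the expansion continues. -/
lemma exists_expansion (hp : ∀ i, 0 < p i) (hν : IsStationary A p ν)
    (halt inv : List ι → Prop) (hstep : ∀ u i, ¬ halt u → inv (u ++ [i])) :
    ∀ (n : ℕ) (u : List ι), (∀ w : List ι, n ≤ w.length → halt (u ++ w)) → inv u →
      ∃ (κ : Type) (_ : Fintype κ) (W : κ → List ι) (a : κ → ℝ),
        (∀ k, 0 ≤ a k ∧ halt (W k) ∧ inv (W k)) ∧
        ∀ S : Set RP1, ν.real (pact (wordProd A u) ⁻¹' S) =
          ∑ k, a k * ν.real (pact (wordProd A (W k)) ⁻¹' S) := by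
  have base : ∀ u, halt u → inv u →
      ∃ (κ : Type) (_ : Fintype κ) (W : κ → List ι) (a : κ → ℝ),
        (∀ k, 0 ≤ a k ∧ halt (W k) ∧ inv (W k)) ∧
        ∀ S : Set RP1, ν.real (pact (wordProd A u) ⁻¹' S) =
          ∑ k, a k * ν.real (pact (wordProd A (W k)) ⁻¹' S) := fun u hs hi =>
    ⟨Unit, inferInstance, fun _ => u, fun _ => 1, fun _ => ⟨zero_le_one, hs, hi⟩,
      fun S => by simp⟩
  intro n
  induction n with
  | zero =>
    intro u h hi
    exact base u (by simpa using h [] le_rfl) hi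
  | succ n ih =>
    intro u h hi
    by_cases hs : halt u
    · exact base u hs hi
    · have key : ∀ i, ∃ (κ : Type) (_ : Fintype κ) (W : κ → List ι) (a : κ → ℝ),
          (∀ k, 0 ≤ a k ∧ halt (W k) ∧ inv (W k)) ∧
          ∀ S : Set RP1, ν.real (pact (wordProd A (u ++ [i])) ⁻¹' S) =
            ∑ k, a k * ν.real (pact (wordProd A (W k)) ⁻¹' S) := fun i =>
        ih (u ++ [i]) (fun w hw => by
          rw [List.append_assoc]
          exact h _ (by simpa using hw)) (hstep u i hs)
      choose κ hκ W a ha hS using key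
      refine ⟨Σ i, κ i, inferInstance, fun x => W x.1 x.2, fun x => p x.1 * a x.1 x.2,
        fun x => ⟨mul_nonneg (hp _).le (ha _ _).1, (ha _ _).2⟩, fun S => ?_⟩
      rw [stationary_real hp hν, Fintype.sum_sigma]
      refine Finset.sum_congr rfl fun i _ => ?_
      have : pact (A i) ⁻¹' (pact (wordProd A u) ⁻¹' S) =
          pact (wordProd A (u ++ [i])) ⁻¹' S := by
        ext x
        rw [wordProd_append, wordProd_singleton]
        simp only [mem_preimage, pact_mul]
      rw [this, hS, Finset.mul_sum]
      simp only [mul_assoc]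

/-- The expansion of `ν` itself, a convex combination. -/
lemma exists_expansion_nil (hp : ∀ i, 0 < p i) (hν : IsStationary A p ν)
    (halt inv : List ι → Prop) (hstep : ∀ u i, ¬ halt u → inv (u ++ [i])) (n : ℕ)
    (hhalt : ∀ w : List ι, n ≤ w.length → halt w) (hinv : inv []) :
      ∃ (κ : Type) (_ : Fintype κ) (W : κ → List ι) (a : κ → ℝ),
        (∀ k, 0 ≤ a k ∧ halt (W k) ∧ inv (W k)) ∧ ∑ k, a k = 1 ∧
        ∀ S : Set RP1, ν.real S = ∑ k, a k * ν.real (pact (wordProd A (W k)) ⁻¹' S) := by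
  obtain ⟨κ, hκ, W, a, ha, hS⟩ := exists_expansion hp hν halt inv hstep n [] hhalt hinv
  have hS' : ∀ S : Set RP1, ν.real S = ∑ k, a k * ν.real (pact (wordProd A (W k)) ⁻¹' S) := by
    intro S
    rw [← hS, wordProd_nil, pact_one, preimage_id]
  refine ⟨κ, hκ, W, a, ha, ?_, hS'⟩
  simpa using (hS' univ).symm

/-! ### Uniform expansion on a set of full measure -/

lemma exists_contracted_dir (B : SL2) : ∃ y : RP1, ∀ x, gr B x ≤ 1 → sd x y ≤ 2 / Nf B := by
  obtain ⟨y, hy1, hy⟩ := exists_contracted B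
  have hy0 : y ≠ 0 := ne_zero_of_nv (hy1 ▸ one_pos)
  refine ⟨Projectivization.mk ℝ y hy0, fun x hx => ?_⟩
  obtain ⟨θ, -, -, rfl⟩ := exists_dir x
  rw [gr_dir] at hx
  have : sd (dir θ) (Projectivization.mk ℝ y hy0) = |om (ap B (uv θ)) (ap B y)| := by
    rw [dir, sd_mk, om_ap]
    change |om (uv θ) y| / (nv (uv θ) * nv y) = _
    rw [nv_uv, hy1, one_mul, div_one]
  rw [this]
  calc _ ≤ nv (ap B (uv θ)) * nv (ap B y) := abs_om_le _ _
    _ ≤ 1 * (2 / Nf B) := by gcongr; exact nv_nonneg _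
    _ = _ := one_mul _

/-- The set of lines which every product of the family stretches by a definite proportion of its
norm. -/
def expSet (A : ι → SL2) (κ : ℝ) : Set RP1 :=
  {x | ∀ w, κ * Nf (wordProd A w) ≤ gr (wordProd A w) x}

/-- If `ν` does not charge small arcs, almost every line is stretched uniformly. A line `A_u x`
outside this set is contracted by no long backward product, so that `x` lies in a short arc around
the direction contracted by `A_u`. -/
lemma exists_expSet (hp : ∀ i, 0 < p i) (hν : IsStationary A p ν) {L c r : ℝ} (hL1 : 1 ≤ L)
    (hL : ∀ i, Nf (A i) ≤ L) (hc : 0 < c) (hr : 1 < r)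
    (hg : ∀ w, w ≠ [] → c * r ^ w.length ≤ Nf (wordProd A w))
    (hsmall : ∀ ε > 0, ∃ ρ > 0, ∀ (y : RP1) (S : Set RP1), (∀ x ∈ S, sd x y ≤ ρ) → ν.real S ≤ ε) :
    ∃ κ, 0 < κ ∧ κ ≤ 1 ∧ ν.real (expSet A κ)ᶜ = 0 := by
  obtain ⟨κ, hκ0, hκ1, N, hN⟩ := exists_uniform_expansion hL1 hL hc hr hg
  refine ⟨κ, hκ0, hκ1, le_antisymm (le_of_forall_pos_le_add fun ε hε => ?_) measureReal_nonneg⟩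
  rw [zero_add]
  obtain ⟨ρ, hρ, hS⟩ := hsmall ε hε
  have hlim : Tendsto (fun n : ℕ => c * r ^ n) atTop atTop :=
    (tendsto_pow_atTop_atTop_of_one_lt hr).const_mul_atTop hc
  obtain ⟨n₀, hn₀⟩ := eventually_atTop.1 (hlim.eventually_ge_atTop (2 / ρ))
  obtain ⟨I, hI, W, a, ha, hsum, hexp⟩ := exists_expansion_nil hp hν
    (fun w => N + n₀ + 1 ≤ w.length) (fun _ => True) (fun _ _ _ => trivial) (N + n₀ + 1)
    (fun _ h => h) trivial
  rw [hexp]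
  calc ∑ k, a k * ν.real (pact (wordProd A (W k)) ⁻¹' (expSet A κ)ᶜ) ≤ ∑ k, a k * ε := by
        refine Finset.sum_le_sum fun k _ => mul_le_mul_of_nonneg_left ?_ (ha k).1
        have hlen := (ha k).2.1
        have hne : W k ≠ [] := by
          intro h
          rw [h] at hlen
          simp at hlen
        obtain ⟨y, hy⟩ := exists_contracted_dir (wordProd A (W k))
        refine hS y _ fun x hx => (hy x ?_).trans ?_
        · by_contra! h
          apply hx
          obtain ⟨θ, -, -, hθ⟩ := exists_dir (pact (wordProd A (W k)) x)
          rw [← hθ]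
          intro w
          rw [gr_dir]
          refine hN (uv θ) (nv_uv θ) ⟨W k, by omega, ?_⟩ w
          rw [← gr_dir, hθ, gr_inv_pact]
          exact inv_le_one_of_one_le₀ h.le
        · have h1 := (hn₀ (W k).length (by omega)).trans (hg _ hne)
          rw [div_le_iff₀ hρ] at h1
          rw [div_le_iff₀ (by linarith [one_le_Nf (wordProd A (W k))])]
          linarith
    _ = ε := by rw [← Finset.sum_mul, hsum, one_mul]

end Stationary

/-! ### The estimate for one stopping word -/

open Classical in
/-- If `B` expands uniformly on `P` and `‖B‖² ≈ 2^s`, then up to multiplicities bounded by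
`2b + 3` and `7` the map `B` carries dyadic arcs of level `m` to those of level `s + m`. -/
lemma word_estimate {ν : Measure RP1} [IsProbabilityMeasure ν] {q : ℝ} (hq : 1 < q) {κ D : ℝ}
    (hκ : 0 < κ) {P : Set RP1} (hP : ν.real Pᶜ = 0) (B : SL2) (hB : ∀ x ∈ P, κ * Nf B ≤ gr B x)
    {s m b : ℕ} (h1 : 2 * 2 ^ s ≤ κ ^ 2 * Nf B ^ 2) (h2 : Nf B ^ 2 ≤ D * 2 ^ s)
    (hb : Real.pi * D ≤ b) :
    ∑ j ∈ Finset.range (2 ^ (s + m)), ν.real (pact B ⁻¹' dyadic (s + m) j) ^ q ≤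
      (2 * b + 3 : ℝ) ^ (q - 1) * 7 * lqSum ν q m := by
  have hNf : 0 < Nf B := by linarith [one_le_Nf B]
  have hpi := Real.pi_pos
  set R := fun j j' : ℕ => ∃ x ∈ P, x ∈ dyadic m j' ∧ pact B x ∈ dyadic (s + m) j with hR
  have hcol : ∀ j, ((Finset.range (2 ^ m)).filter fun j' => R j j').card ≤ 2 * b + 3 := by
    intro j
    by_cases hne : ∃ x₀ ∈ P, pact B x₀ ∈ dyadic (s + m) j
    · obtain ⟨x₀, -, hx₀⟩ := hne
      refine (Finset.card_le_card ?_).trans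
        (card_dyadic_le m b x₀ {x | pact B x ∈ dyadic (s + m) j} fun x hx => ?_)
      · refine Finset.monotone_filter_right _ fun j' _ hj' => ?_
        obtain ⟨x, -, hx, hx'⟩ := hj'
        exact ⟨x, hx, hx'⟩
      · have h3 := sd_le_of_mem_dyadic hx hx₀
        rw [sd_pact, div_le_iff₀ (mul_pos (gr_pos _ _) (gr_pos _ _))] at h3
        calc sd x x₀ ≤ Real.pi / 2 ^ (s + m) * (gr B x * gr B x₀) := h3
          _ ≤ Real.pi / 2 ^ (s + m) * (Nf B * Nf B) := by
            gcongr
            · exact (gr_pos _ _).le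
            · exact gr_le _ _
            · exact gr_le _ _
          _ ≤ Real.pi / 2 ^ (s + m) * (D * 2 ^ s) := by rw [← sq]; gcongr
          _ = Real.pi * D / 2 ^ m := by rw [pow_add]; field_simp
          _ ≤ b / 2 ^ m := by gcongr
    · rw [Finset.filter_false_of_mem]
      · simp
      · rintro j' - ⟨x, hx, -, hx'⟩
        exact hne ⟨x, hx, hx'⟩
  have hrow : ∀ j', ((Finset.range (2 ^ (s + m))).filter fun j => R j j').card ≤ 7 := by
    intro j'
    by_cases hne : ∃ x₀ ∈ P, x₀ ∈ dyadic m j'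
    · obtain ⟨x₀, hx₀P, hx₀⟩ := hne
      refine (Finset.card_le_card ?_).trans
        (card_dyadic_le (s + m) 2 (pact B x₀) (pact B '' (P ∩ dyadic m j')) ?_)
      · refine Finset.monotone_filter_right _ fun j _ hj => ?_
        obtain ⟨x, hxP, hx, hx'⟩ := hj
        exact ⟨_, hx', x, ⟨hxP, hx⟩, rfl⟩
      · rintro _ ⟨x, ⟨hxP, hx⟩, rfl⟩
        have h3 := sd_le_of_mem_dyadic hx hx₀
        have h4 : 2 * 2 ^ s ≤ gr B x * gr B x₀ := by
          refine h1.trans ?_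
          calc κ ^ 2 * Nf B ^ 2 = (κ * Nf B) * (κ * Nf B) := by ring
            _ ≤ gr B x * gr B x₀ := by
              gcongr
              · exact (gr_pos _ _).le
              · exact hB x hxP
              · exact hB x₀ hx₀P
        rw [sd_pact]
        calc sd x x₀ / (gr B x * gr B x₀) ≤ (Real.pi / 2 ^ m) / (2 * 2 ^ s) := by
              gcongr
          _ = (Real.pi / 2) / 2 ^ (s + m) := by rw [pow_add]; field_simp
          _ ≤ (2 : ℕ) / 2 ^ (s + m) := by
            gcongr
            push_cast
            linarith [Real.pi_le_four]
    · rw [Finset.filter_false_of_mem]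
      · simp
      · rintro j - ⟨x, hx, hx', -⟩
        exact hne ⟨x, hx, hx'⟩
  have hmass : ∀ j, ν.real (pact B ⁻¹' dyadic (s + m) j) ≤
      ∑ j' ∈ (Finset.range (2 ^ m)).filter (fun j' => R j j'), ν.real (dyadic m j') := by
    intro j
    have hcov : pact B ⁻¹' dyadic (s + m) j ⊆
        (⋃ j' ∈ (Finset.range (2 ^ m)).filter (fun j' => R j j'), dyadic m j') ∪ Pᶜ := by
      intro x hx
      by_cases hxP : x ∈ P
      · obtain ⟨j', hj', hxj'⟩ := exists_mem_dyadic m x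
        exact Or.inl (mem_biUnion (Finset.mem_coe.2 (Finset.mem_filter.2
          ⟨Finset.mem_range.2 hj', x, hxP, hxj', hx⟩)) hxj')
      · exact Or.inr hxP
    refine (measureReal_mono hcov (measure_ne_top _ _)).trans ((measureReal_union_le _ _).trans ?_)
    rw [hP, add_zero]
    exact measureReal_biUnion_finset_le _ _
  have hq1 : 0 ≤ q - 1 := by linarith
  calc ∑ j ∈ Finset.range (2 ^ (s + m)), ν.real (pact B ⁻¹' dyadic (s + m) j) ^ q
      ≤ ∑ j ∈ Finset.range (2 ^ (s + m)), (2 * b + 3 : ℝ) ^ (q - 1) *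
          ∑ j' ∈ (Finset.range (2 ^ m)).filter (fun j' => R j j'), ν.real (dyadic m j') ^ q := by
        refine Finset.sum_le_sum fun j _ => ?_
        refine (Real.rpow_le_rpow measureReal_nonneg (hmass j) (by linarith)).trans ?_
        refine (Real.rpow_sum_le_const_mul_sum_rpow_of_nonneg _ hq.le
          fun _ _ => measureReal_nonneg).trans ?_
        refine mul_le_mul_of_nonneg_right (Real.rpow_le_rpow (by positivity) ?_ hq1)
          (Finset.sum_nonneg fun _ _ => Real.rpow_nonneg measureReal_nonneg _)
        exact_mod_cast hcol j
    _ = (2 * b + 3 : ℝ) ^ (q - 1) * ∑ j' ∈ Finset.range (2 ^ m),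
          ∑ j ∈ (Finset.range (2 ^ (s + m))).filter (fun j => R j j'),
            ν.real (dyadic m j') ^ q := by
        rw [← Finset.mul_sum]
        congr 1
        exact Finset.sum_comm' (by simp only [Finset.mem_filter]; tauto)
    _ ≤ (2 * b + 3 : ℝ) ^ (q - 1) * ∑ j' ∈ Finset.range (2 ^ m),
          7 * ν.real (dyadic m j') ^ q := by
        refine mul_le_mul_of_nonneg_left (Finset.sum_le_sum fun j' _ => ?_) (by positivity)
        rw [Finset.sum_const, nsmul_eq_mul]
        refine mul_le_mul_of_nonneg_right ?_ (Real.rpow_nonneg measureReal_nonneg _)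
        exact_mod_cast hrow j'
    _ = _ := by
        rw [← Finset.mul_sum, mul_assoc]
        rfl

/-! ### Summing over stopping words -/

/-- Jensen's inequality with weights of arbitrary total mass. -/
lemma rpow_sum_weight_le {α : Type*} (s : Finset α) (a f : α → ℝ) (ha : ∀ i, 0 ≤ a i)
    (hf : ∀ i, 0 ≤ f i) {q : ℝ} (hq : 1 < q) :
    (∑ i ∈ s, a i * f i) ^ q ≤ (∑ i ∈ s, a i) ^ (q - 1) * ∑ i ∈ s, a i * f i ^ q := by
  have h0 : 0 ≤ ∑ i ∈ s, a i := Finset.sum_nonneg fun i _ => ha i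
  have h1 : 0 ≤ ∑ i ∈ s, a i * f i ^ q :=
    Finset.sum_nonneg fun i _ => mul_nonneg (ha i) (Real.rpow_nonneg (hf i) _)
  have hq0 : q ≠ 0 := by linarith
  refine (Real.rpow_le_rpow (Finset.sum_nonneg fun i _ => mul_nonneg (ha i) (hf i))
    (Real.inner_le_weight_mul_Lp_of_nonneg s hq.le a f ha hf) (by linarith)).trans_eq ?_
  rw [Real.mul_rpow (Real.rpow_nonneg h0 _) (Real.rpow_nonneg h1 _), ← Real.rpow_mul h0,
    ← Real.rpow_mul h1, inv_mul_cancel₀ hq0, Real.rpow_one]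
  congr 2
  field_simp

section Main

variable {ι : Type} [Fintype ι] {A : ι → SL2} {p : ι → ℝ} {ν : Measure RP1}
  [IsProbabilityMeasure ν] {q : ℝ}

lemma localSum_le_lqSum (hq : 1 < q) (hp : ∀ i, 0 < p i) (hν : IsStationary A p ν) {L c r κ : ℝ}
    (hL2 : 2 ≤ L) (hL : ∀ i, Nf (A i) ≤ L) (hc : 0 < c) (hr : 1 < r)
    (hg : ∀ w, w ≠ [] → c * r ^ w.length ≤ Nf (wordProd A w))
    (hκ0 : 0 < κ) (hκ1 : κ ≤ 1) (hP : ν.real (expSet A κ)ᶜ = 0) {b : ℕ}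
    (hb : Real.pi * (L ^ 2 * (2 / κ ^ 2)) ≤ b) (s m k : ℕ) (hk : k < 2 ^ s) :
    localSum ν q s m k ≤
      (2 * b + 3 : ℝ) ^ (q - 1) * 7 * lqSum ν q m * ν.real (dyadic2 s k) ^ q := by
  classical
  set P := expSet A κ with hPdef
  set C : ℝ := (2 * b + 3 : ℝ) ^ (q - 1) * 7 * lqSum ν q m with hC
  -- words are stopped once `B = A_w` has norm so large that `B P` has size less than `2^{-s}`
  set R2 : ℝ := 2 / κ ^ 2 * 2 ^ s with hR2
  have hR2le : 2 ≤ R2 := by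
    have h1 : (1 : ℝ) ≤ 2 ^ s := one_le_pow₀ one_le_two
    have h2 : 2 ≤ 2 / κ ^ 2 := by
      rw [le_div_iff₀ (by positivity)]
      nlinarith [pow_le_one₀ hκ0.le hκ1 (n := 2)]
    nlinarith
  have hlim : Tendsto (fun n : ℕ => c * r ^ n) atTop atTop :=
    (tendsto_pow_atTop_atTop_of_one_lt hr).const_mul_atTop hc
  obtain ⟨n₀, hn₀⟩ := eventually_atTop.1 (hlim.eventually_ge_atTop R2)
  obtain ⟨I, hI, W, a, ha, -, hexp⟩ := exists_expansion_nil hp hν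
    (fun w => R2 ≤ Nf (wordProd A w) ^ 2) (fun w => Nf (wordProd A w) ^ 2 ≤ L ^ 2 * R2)
    (fun u i hu => by
      rw [wordProd_append, wordProd_singleton]
      have h1 := Nf_mul_le (wordProd A u) (A i)
      have h2 : Nf (wordProd A u) * Nf (A i) ≤ Nf (wordProd A u) * L :=
        mul_le_mul_of_nonneg_left (hL i) (Nf_nonneg _)
      calc _ ≤ (Nf (wordProd A u) * L) ^ 2 := by
            gcongr
            · exact Nf_nonneg _
            · exact h1.trans h2
        _ = L ^ 2 * Nf (wordProd A u) ^ 2 := by ring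
        _ ≤ L ^ 2 * R2 := by
            gcongr
            exact (not_le.1 hu).le)
    (n₀ + 1)
    (fun w hw => by
      have hne : w ≠ [] := by
        intro h
        rw [h] at hw
        simp at hw
      have h1 := (hn₀ w.length (by omega)).trans (hg w hne)
      nlinarith [one_le_Nf (wordProd A w)])
    (by
      rw [wordProd_nil]
      have := Nf_one_le
      have := Nf_nonneg 1
      nlinarith)
  set B : I → SL2 := fun i => wordProd A (W i) with hB
  have hBP : ∀ i, ∀ x ∈ P, κ * Nf (B i) ≤ gr (B i) x := fun i x hx => hx (W i)
  have hlow : ∀ i, 2 * 2 ^ s ≤ κ ^ 2 * Nf (B i) ^ 2 := fun i => by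
    have h1 : R2 ≤ Nf (B i) ^ 2 := (ha i).2.1
    calc (2 : ℝ) * 2 ^ s = κ ^ 2 * R2 := by rw [hR2]; field_simp
      _ ≤ _ := by gcongr
  have hup : ∀ i, Nf (B i) ^ 2 ≤ L ^ 2 * (2 / κ ^ 2) * 2 ^ s := fun i => by
    rw [mul_assoc]
    exact (ha i).2.2
  have hPge : 1 ≤ ν.real P := by
    have h1 := measureReal_union_le (μ := ν) P Pᶜ
    rw [union_compl_self, probReal_univ, hP, add_zero] at h1
    exact h1
  -- the stopping words whose image of `P` meets the arc
  set G : Finset I := Finset.univ.filter fun i => ∃ x ∈ P, pact (B i) x ∈ dyadic s k with hG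
  have hGW : ∑ i ∈ G, a i ≤ ν.real (dyadic2 s k) := by
    rw [hexp]
    calc ∑ i ∈ G, a i ≤ ∑ i ∈ G, a i * ν.real (pact (B i) ⁻¹' dyadic2 s k) := by
          refine Finset.sum_le_sum fun i hi => le_mul_of_one_le_right (ha i).1 ?_
          refine hPge.trans (measureReal_mono (fun y hy => ?_) (measure_ne_top _ _))
          obtain ⟨x, hx, hxI⟩ := (Finset.mem_filter.1 hi).2
          refine mem_dyadic2 hxI ?_
          have h4 : 2 * 2 ^ s ≤ gr (B i) y * gr (B i) x := by
            refine (hlow i).trans ?_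
            have h0 := mul_nonneg hκ0.le (Nf_nonneg (B i))
            calc κ ^ 2 * Nf (B i) ^ 2 = (κ * Nf (B i)) * (κ * Nf (B i)) := by ring
              _ ≤ _ := mul_le_mul (hBP i y hy) (hBP i x hx) h0 (gr_pos _ _).le
          have h5 : (0 : ℝ) < 2 ^ s := by positivity
          rw [sd_pact, div_lt_div_iff₀ (by linarith) h5]
          nlinarith [sd_le_one y x]
      _ ≤ ∑ i, a i * ν.real (pact (B i) ⁻¹' dyadic2 s k) :=
          Finset.sum_le_sum_of_subset_of_nonneg (Finset.filter_subset _ _)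
            fun i _ _ => mul_nonneg (ha i).1 measureReal_nonneg
  have hJ : ∀ J : Set RP1, J ⊆ dyadic s k →
      ν.real J = ∑ i ∈ G, a i * ν.real (pact (B i) ⁻¹' J) := by
    intro J hJ
    rw [hexp]
    symm
    refine Finset.sum_subset (Finset.filter_subset _ _) fun i _ hi => ?_
    have hsub : pact (B i) ⁻¹' J ⊆ Pᶜ := fun x hx hxP =>
      hi (Finset.mem_filter.2 ⟨Finset.mem_univ _, x, hxP, hJ hx⟩)
    have h0 : ν.real (pact (B i) ⁻¹' J) = 0 :=
      le_antisymm ((measureReal_mono hsub (measure_ne_top _ _)).trans hP.le) measureReal_nonneg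
    rw [h0, mul_zero]
  set w := ∑ i ∈ G, a i with hw
  have hw0 : 0 ≤ w := Finset.sum_nonneg fun i _ => (ha i).1
  have hC0 : 0 ≤ C := mul_nonneg (by positivity) (lqSum_pos m).le
  rw [localSum_eq]
  set F := (Finset.range (2 ^ (s + m))).filter
      (fun j => (dyadic (s + m) j ∩ dyadic s k).Nonempty) with hF
  calc ∑ j ∈ F, ν.real (dyadic (s + m) j) ^ q
      ≤ ∑ j ∈ F, w ^ (q - 1) * ∑ i ∈ G, a i * ν.real (pact (B i) ⁻¹' dyadic (s + m) j) ^ q := by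
        refine Finset.sum_le_sum fun j hj => ?_
        rw [hF, Finset.mem_filter, Finset.mem_range] at hj
        rw [hJ _ (dyadic_nested hj.1 hk hj.2)]
        exact rpow_sum_weight_le G a _ (fun i => (ha i).1) (fun _ => measureReal_nonneg) hq
    _ = w ^ (q - 1) * ∑ i ∈ G, a i *
          ∑ j ∈ F, ν.real (pact (B i) ⁻¹' dyadic (s + m) j) ^ q := by
        rw [← Finset.mul_sum, Finset.sum_comm]
        simp only [Finset.mul_sum]
    _ ≤ w ^ (q - 1) * ∑ i ∈ G, a i * C := by
        refine mul_le_mul_of_nonneg_left (Finset.sum_le_sum fun i _ =>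
          mul_le_mul_of_nonneg_left ?_ (ha i).1) (Real.rpow_nonneg hw0 _)
        refine (Finset.sum_le_sum_of_subset_of_nonneg (Finset.filter_subset _ _)
          fun _ _ _ => Real.rpow_nonneg measureReal_nonneg _).trans ?_
        exact word_estimate hq hκ0 hP (B i) (hBP i) (hlow i) (hup i) hb
    _ = C * w ^ q := by
        rw [← Finset.sum_mul, ← hw, ← mul_assoc, ← Real.rpow_add_one' hw0 (by linarith),
          sub_add_cancel, mul_comm]
    _ ≤ C * ν.real (dyadic2 s k) ^ q := by
        gcongr

end Main

/-- the local L^q norm estimate (Lemma 2.18 (ii)). -/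
theorem statement16 {ι : Type} [Fintype ι] [Nonempty ι]
    (A : ι → SL2) (hUH : UniformlyHyperbolic A)
    (K : Set RP1) (hK : IsAttractor A K)
    (p : ι → ℝ) (hp : ∀ i, 0 < p i) (hp1 : ∑ i : ι, p i = 1)
    (ν : Measure RP1) [IsProbabilityMeasure ν] (hν : IsStationary A p ν) (hνK : ν K = 1)
    (q : ℝ) (hq : 1 < q) :
    ∀ δ ∈ Set.Ioo (0:ℝ) 1, ∃ M : ℕ, ∀ m : ℕ, M ≤ m → ∀ s k : ℕ, k < 2 ^ s →
      localSum ν q s m k ≤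
        (2:ℝ) ^ (-(lqSpectrum ν q - δ) * m) * (ν (dyadic2 s k)).toReal ^ q := by
  intro δ hδ
  have hδ0 : 0 < δ := hδ.1
  rcases le_or_gt (lqSpectrum ν q) δ with hτ | hτ
  · refine ⟨0, fun m _ s k hk => (localSum_le_trivial hq hk).trans ?_⟩
    refine le_mul_of_one_le_left (Real.rpow_nonneg ENNReal.toReal_nonneg _) ?_
    exact Real.one_le_rpow one_le_two (mul_nonneg (by linarith) (Nat.cast_nonneg m))
  obtain ⟨c, hc, r, hr, hg⟩ := hUH
  have hg' : ∀ w, w ≠ [] → c * r ^ w.length ≤ Nf (wordProd A w) := fun w hw =>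
    (hg w hw).trans (opNorm_le_Nf _)
  set L := 2 + ∑ i, Nf (A i) with hLdef
  have hL2 : 2 ≤ L := by
    have : 0 ≤ ∑ i, Nf (A i) := Finset.sum_nonneg fun i _ => Nf_nonneg _
    linarith
  have hL : ∀ i, Nf (A i) ≤ L := fun i => by
    have := Finset.single_le_sum (f := fun i => Nf (A i)) (fun i _ => Nf_nonneg _)
      (Finset.mem_univ i)
    linarith
  obtain ⟨κ, hκ0, hκ1, hP⟩ := exists_expSet hp hν (by linarith) hL hc hr hg'
    (fun ε hε => exists_small_radius hq (hδ0.trans hτ) hε)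
  obtain ⟨b, hb⟩ := exists_nat_ge (Real.pi * (L ^ 2 * (2 / κ ^ 2)))
  set C : ℝ := (2 * b + 3 : ℝ) ^ (q - 1) * 7 with hC
  obtain ⟨M₁, hM₁⟩ := exists_lqSum_le (ν := ν) hq
    (show lqSpectrum ν q - δ / 2 < lqSpectrum ν q by linarith)
  -- the constant `C` is absorbed by half of the loss `δ` in the exponent
  have hlim : Tendsto (fun m : ℕ => ((2 : ℝ) ^ (δ / 2)) ^ m) atTop atTop :=
    tendsto_pow_atTop_atTop_of_one_lt (Real.one_lt_rpow one_lt_two (by linarith))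
  obtain ⟨M₂, hM₂⟩ := eventually_atTop.1 (hlim.eventually_ge_atTop C)
  refine ⟨max M₁ M₂, fun m hm s k hk => ?_⟩
  refine (localSum_le_lqSum hq hp hν hL2 hL hc hr hg' hκ0 hκ1 hP hb s m k hk).trans ?_
  refine mul_le_mul_of_nonneg_right ?_ (Real.rpow_nonneg ENNReal.toReal_nonneg _)
  have h1 := hM₁ m (le_of_max_le_left hm)
  have h2 := hM₂ m (le_of_max_le_right hm)
  rw [← Real.rpow_natCast, ← Real.rpow_mul (by norm_num)] at h2
  calc C * lqSum ν q m
      ≤ (2 : ℝ) ^ (δ / 2 * m) * (2 : ℝ) ^ (-(lqSpectrum ν q - δ / 2) * m) :=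
        mul_le_mul h2 h1 (lqSum_pos m).le (by positivity)
    _ = (2 : ℝ) ^ (-(lqSpectrum ν q - δ) * m) := by
        rw [← Real.rpow_add two_pos]
        congr 1
        ring

end

end Paper
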